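/- arXiv:2312.16319 — 6 statements merged into one kernel-verified Lean document; each statement's English description precedes it below -/
import Mathlib

section
/- For every integer n ≥ 5 there exist elements x and y of the alternating group A_n such that the order of y is a prime number and for all g, h ∈ A_n, the subgroup of A_n generated by g⁻¹xg and h⁻¹yh is all of A_n. -/
open Equiv Equiv.Perm

/-! ### Degree six: a finite search for words which are three-cycles -/

/-- Action of the permutation `(0 1 2 3)(4 5)` on natural numbers. -/
def sixX (i : ℕ) : ℕ :=
  bif Nat.beq i 0 then 1 else bif Nat.beq i 1 then 2 else bif Nat.beq i 2 then 3
  else bif Nat.beq i 3 then 0 else bif Nat.beq i 4 then 5 else 4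

/-- Action of the five-cycle `(a b c d e)` on natural numbers. -/
def sixY (a b c d e i : ℕ) : ℕ :=
  bif Nat.beq i a then b else bif Nat.beq i b then c else bif Nat.beq i c then d
  else bif Nat.beq i d then e else bif Nat.beq i e then a else i

/-- The function moves exactly three points of `{0, …, 5}`. -/
def sixMoves (w : ℕ → ℕ) : Bool :=
  Nat.beq ((bif Nat.beq (w 0) 0 then 0 else 1) + (bif Nat.beq (w 1) 1 then 0 else 1)
    + (bif Nat.beq (w 2) 2 then 0 else 1) + (bif Nat.beq (w 3) 3 then 0 else 1)
    + (bif Nat.beq (w 4) 4 then 0 else 1) + (bif Nat.beq (w 5) 5 then 0 else 1)) 3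

/-- One of eight words in `x`, `y`, `y⁻¹` (here `z`) moves exactly three points. -/
def sixWords (x y z : ℕ → ℕ) : Bool :=
  sixMoves (fun i => x (y i)) || sixMoves (fun i => x (z i)) ||
  sixMoves (fun i => x (x (y i))) || sixMoves (fun i => x (x (y (x (z i))))) ||
  sixMoves (fun i => x (x (y (x (y (x (z i))))))) ||
  sixMoves (fun i => x (x (y (x (z (x (z i))))))) ||
  sixMoves (fun i => x (x (y (y (x (z (z i))))))) ||
  sixMoves (fun i => x (x (z (z (x (y (y i)))))))

theorem six_check :
    ([0, 1, 2, 3, 4, 5].all fun a => [0, 1, 2, 3, 4, 5].all fun b => Nat.beq a b ||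
      [0, 1, 2, 3, 4, 5].all fun c => (Nat.beq c a || Nat.beq c b) ||
      [0, 1, 2, 3, 4, 5].all fun d => (Nat.beq d a || Nat.beq d b || Nat.beq d c) ||
      [0, 1, 2, 3, 4, 5].all fun e =>
        (Nat.beq e a || Nat.beq e b || Nat.beq e c || Nat.beq e d) ||
        sixWords sixX (sixY a b c d e) (sixY e d c b a)) = true := by
  decide +kernel

theorem sixMoves_spec (w : Perm (Fin 6)) (W : ℕ → ℕ) (hW : ∀ i, (w i).val = W i.val)
    (h : sixMoves W = true) : w.IsThreeCycle := by
  rw [← card_support_eq_three_iff]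
  have h1 : w.support.card = ∑ i : Fin 6, if W i.val = i.val then 0 else 1 := by
    rw [Finset.card_eq_sum_ones, support, Finset.sum_filter]
    refine Finset.sum_congr rfl fun i _ => ?_
    have : w i = i ↔ W i.val = i.val := by rw [← hW, Fin.ext_iff]
    simp only [ne_eq, this]
    split_ifs <;> rfl
  rw [h1]
  simp only [sixMoves, Nat.beq_eq, Bool.cond_eq_ite] at h
  rw [Fin.sum_univ_six]
  exact h

theorem six_words_aux (x y : Perm (Fin 6)) (X Y Z : ℕ → ℕ) (ex : ∀ i, (x i).val = X i.val)
    (ey : ∀ i, (y i).val = Y i.val) (ez : ∀ i, (y⁻¹ i).val = Z i.val)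
    (H : Subgroup (Perm (Fin 6))) (hX : x ∈ H) (hY : y ∈ H) (hc5 : sixWords X Y Z = true) :
    ∃ w ∈ H, w.IsThreeCycle := by
  have hZ := H.inv_mem hY
  simp only [sixWords, Bool.or_eq_true] at hc5
  rcases hc5 with ((((((h | h) | h) | h) | h) | h) | h) | h
  · exact ⟨x * y, by
      repeat' (first | exact hX | exact hY | exact hZ | apply mul_mem),
      sixMoves_spec _ _ (fun i => by simp only [Perm.mul_apply, ex, ey]) h⟩
  · exact ⟨x * y⁻¹, by
      repeat' (first | exact hX | exact hY | exact hZ | apply mul_mem),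
      sixMoves_spec _ _ (fun i => by simp only [Perm.mul_apply, ex, ez]) h⟩
  · exact ⟨x * (x * y), by
      repeat' (first | exact hX | exact hY | exact hZ | apply mul_mem),
      sixMoves_spec _ _ (fun i => by simp only [Perm.mul_apply, ex, ey]) h⟩
  · exact ⟨x * (x * (y * (x * y⁻¹))), by
      repeat' (first | exact hX | exact hY | exact hZ | apply mul_mem),
      sixMoves_spec _ _ (fun i => by simp only [Perm.mul_apply, ex, ey, ez]) h⟩
  · exact ⟨x * (x * (y * (x * (y * (x * y⁻¹))))), by
      repeat' (first | exact hX | exact hY | exact hZ | apply mul_mem),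
      sixMoves_spec _ _ (fun i => by simp only [Perm.mul_apply, ex, ey, ez]) h⟩
  · exact ⟨x * (x * (y * (x * (y⁻¹ * (x * y⁻¹))))), by
      repeat' (first | exact hX | exact hY | exact hZ | apply mul_mem),
      sixMoves_spec _ _ (fun i => by simp only [Perm.mul_apply, ex, ey, ez]) h⟩
  · exact ⟨x * (x * (y * (y * (x * (y⁻¹ * y⁻¹))))), by
      repeat' (first | exact hX | exact hY | exact hZ | apply mul_mem),
      sixMoves_spec _ _ (fun i => by simp only [Perm.mul_apply, ex, ey, ez]) h⟩
  · exact ⟨x * (x * (y⁻¹ * (y⁻¹ * (x * (y * y))))), by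
      repeat' (first | exact hX | exact hY | exact hZ | apply mul_mem),
      sixMoves_spec _ _ (fun i => by simp only [Perm.mul_apply, ex, ey, ez]) h⟩

theorem six_words (x y : Perm (Fin 6)) (hx : x.cycleType = {4, 2}) (hy : y.cycleType = {5})
    (H : Subgroup (Perm (Fin 6))) (hxH : x ∈ H) (hyH : y ∈ H) :
    ∃ w ∈ H, w.IsThreeCycle := by
  let x₀ : Perm (Fin 6) := c[0,1,2,3] * c[4,5]
  let y₀ : Perm (Fin 6) := c[0,1,2,3,4]
  have hx₀ : x₀.cycleType = {4, 2} := by decide +kernel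
  have hy₀ : y₀.cycleType = {5} := by decide +kernel
  obtain ⟨g, hg⟩ := isConj_iff.1 (isConj_iff_cycleType_eq.2 (hx.trans hx₀.symm))
  have hyg : (g * y * g⁻¹).cycleType = {5} := by rw [cycleType_conj, hy]
  obtain ⟨k, hk⟩ := isConj_iff.1 (isConj_iff_cycleType_eq.2 (hy₀.trans hyg.symm))
  set y₁ := g * y * g⁻¹ with hy₁
  have key : ∃ w ∈ Subgroup.closure {x₀, y₁}, w.IsThreeCycle := by
    have hX : x₀ ∈ Subgroup.closure {x₀, y₁} := Subgroup.subset_closure (by simp)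
    have hY : y₁ ∈ Subgroup.closure {x₀, y₁} := Subgroup.subset_closure (by simp)
    have ex : ∀ i, (x₀ i).val = sixX i.val := by decide +kernel
    have hinj : ∀ i j : Fin 6, (k i).val = (k j).val ↔ i = j := by
      intro i j; rw [← Fin.ext_iff, k.injective.eq_iff]
    have hinvk : ∀ j, k⁻¹ (k j) = j := fun j => k.symm_apply_apply j
    have ey : ∀ i, (y₁ i).val = sixY (k 0) (k 1) (k 2) (k 3) (k 4) i.val := by
      intro i
      obtain ⟨j, rfl⟩ := k.surjective i
      rw [← hk]
      simp only [sixY, Bool.cond_eq_ite, Nat.beq_eq, hinj, Perm.mul_apply, hinvk]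
      revert j
      have h0 : y₀ 0 = 1 ∧ y₀ 1 = 2 ∧ y₀ 2 = 3 ∧ y₀ 3 = 4 ∧ y₀ 4 = 0 ∧ y₀ 5 = 5 := by
        decide +kernel
      obtain ⟨h0, h1, h2, h3, h4, h5⟩ := h0
      intro j
      fin_cases j <;> simp [h0, h1, h2, h3, h4, h5]
    have ez : ∀ i, (y₁⁻¹ i).val = sixY (k 4) (k 3) (k 2) (k 1) (k 0) i.val := by
      intro i
      obtain ⟨j, rfl⟩ := k.surjective i
      rw [← hk]
      simp only [sixY, Bool.cond_eq_ite, Nat.beq_eq, hinj, Perm.mul_apply, mul_inv_rev, inv_inv,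
        hinvk]
      have h0 : y₀⁻¹ 0 = 4 ∧ y₀⁻¹ 1 = 0 ∧ y₀⁻¹ 2 = 1 ∧ y₀⁻¹ 3 = 2 ∧ y₀⁻¹ 4 = 3 ∧ y₀⁻¹ 5 = 5 := by
        decide +kernel
      obtain ⟨h0, h1, h2, h3, h4, h5⟩ := h0
      fin_cases j <;> simp [h0, h1, h2, h3, h4, h5]
    have hmem : ∀ i : Fin 6, i.val ∈ [0, 1, 2, 3, 4, 5] := by decide
    have hc := six_check
    simp only [List.all_eq_true, Bool.or_eq_true, Nat.beq_eq] at hc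
    have hc' := hc _ (hmem (k 0)) _ (hmem (k 1))
    simp only [hinj] at hc'
    have hc2 := (hc'.resolve_left (by decide)) _ (hmem (k 2))
    simp only [hinj] at hc2
    have hc3 := (hc2.resolve_left (by decide)) _ (hmem (k 3))
    simp only [hinj] at hc3
    have hc4 := (hc3.resolve_left (by decide)) _ (hmem (k 4))
    simp only [hinj] at hc4
    have hc5 := hc4.resolve_left (by decide)
    exact six_words_aux x₀ y₁ _ _ _ ex ey ez _ hX hY hc5
  obtain ⟨w, hw, hw3⟩ := key
  have hle : Subgroup.closure {x₀, y₁} ≤ H.map (MulAut.conj g).toMonoidHom := by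
    rw [Subgroup.closure_le]
    rintro _ (rfl | rfl)
    · exact ⟨x, hxH, by simpa using hg⟩
    · exact ⟨y, hyH, by simp [hy₁]⟩
  obtain ⟨v, hv, rfl⟩ := hle hw
  refine ⟨v, hv, ?_⟩
  unfold IsThreeCycle at hw3 ⊢
  rw [← hw3]
  simp [cycleType_conj]

theorem sq_not_dvd_factorial {p : ℕ} (hp : p.Prime) : ¬ p ^ 2 ∣ p.factorial := by
  intro h
  obtain ⟨q, rfl⟩ := Nat.exists_eq_succ_of_ne_zero hp.ne_zero
  rw [Nat.factorial_succ, pow_two] at h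
  have h2 := Nat.dvd_of_mul_dvd_mul_left (Nat.succ_pos q) h
  have h3 := (hp.dvd_factorial).1 h2
  omega

theorem jordan_normalize {α : Type*} [Fintype α] [DecidableEq α] {G : Subgroup (Perm α)}
    {p : ℕ} (hp : p.Prime) {y : Perm α} (hy : y.IsCycle) (hyp : y.support.card = p)
    (hyG : y ∈ G) {g : Perm α} (hgG : g ∈ G) (hg : ∀ a, g a ∈ y.support ↔ a ∈ y.support) :
    ∃ u ∈ G, (∀ a, a ∉ y.support → u a = g a) ∧ ∃ i : ℤ, u * y * u⁻¹ = y ^ i := by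
  have : Fact p.Prime := ⟨hp⟩
  set S := y.support with hS
  let K : Subgroup (Perm {a // a ∈ S}) := G.comap (ofSubtype : Perm {a // a ∈ S} →* Perm α)
  have hginv : ∀ a, g⁻¹ a ∈ S ↔ a ∈ S := by
    intro a
    rw [← hg (g⁻¹ a)]
    simp
  set z := g * y * g⁻¹ with hz
  have hyS : ∀ a, y a ∈ S ↔ a ∈ S := fun a => apply_mem_support
  have hzS : ∀ a, z a ∈ S ↔ a ∈ S := by
    intro a
    simp only [hz, Perm.mul_apply, hg, hyS, hginv]
  have hzS' : ∀ a, z a ≠ a → a ∈ S := by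
    intro a h
    rw [← hginv, hS, mem_support]
    intro h'
    apply h
    simp only [hz, Perm.mul_apply, h']
    simp
  let y0 := y.subtypePerm hyS
  let z0 := z.subtypePerm hzS
  have ey : ofSubtype y0 = y := ofSubtype_subtypePerm hyS (fun a h => by simpa [hS] using h)
  have ez : ofSubtype z0 = z := ofSubtype_subtypePerm hzS hzS'
  have hzG : z ∈ G := G.mul_mem (G.mul_mem hgG hyG) (G.inv_mem hgG)
  let yK : K := ⟨y0, by change ofSubtype y0 ∈ G; rw [ey]; exact hyG⟩
  let zK : K := ⟨z0, by change ofSubtype z0 ∈ G; rw [ez]; exact hzG⟩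
  have oy : orderOf yK = p := by
    rw [← Subgroup.orderOf_coe, ← orderOf_injective _ ofSubtype_injective]
    change orderOf (ofSubtype y0) = p
    rw [ey, hy.orderOf, hyp]
  have oz : orderOf zK = p := by
    rw [← Subgroup.orderOf_coe, ← orderOf_injective _ ofSubtype_injective]
    change orderOf (ofSubtype z0) = p
    rw [ez, hz, (hy.conj).orderOf, card_support_conj, hyp]
  have hfac : (Nat.card K).factorization p = 1 := by
    have h1 : Nat.card K ∣ p.factorial := by
      have := Subgroup.card_subgroup_dvd_card K
      rwa [Nat.card_perm, Nat.card_eq_fintype_card (α := {a // a ∈ S}), Fintype.card_coe, hyp] at this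
    have h2 : p ∣ Nat.card K := by
      rw [← oy]; exact orderOf_dvd_natCard yK
    have h3 : 1 ≤ (Nat.card K).factorization p :=
      (hp.dvd_iff_one_le_factorization Nat.card_pos.ne').1 h2
    have h4 : ¬ 2 ≤ (Nat.card K).factorization p := by
      intro h
      apply sq_not_dvd_factorial hp
      exact ((hp.pow_dvd_iff_le_factorization Nat.card_pos.ne').2 h).trans h1
    omega
  let P1 : Sylow p K := Sylow.ofCard (Subgroup.zpowers yK) (by
    rw [Nat.card_zpowers, oy, hfac, pow_one])
  let P2 : Sylow p K := Sylow.ofCard (Subgroup.zpowers zK) (by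
    rw [Nat.card_zpowers, oz, hfac, pow_one])
  obtain ⟨k, hk⟩ := MulAction.exists_smul_eq K P2 P1
  have hmem : k * zK * k⁻¹ ∈ Subgroup.zpowers yK := by
    change k * zK * k⁻¹ ∈ P1
    rw [← hk]
    have : zK ∈ P2 := Subgroup.mem_zpowers zK
    rw [← SetLike.mem_coe, Sylow.coe_smul]
    refine ⟨zK, this, rfl⟩
  obtain ⟨i, hi⟩ := Subgroup.mem_zpowers_iff.1 hmem
  refine ⟨ofSubtype k.1 * g, G.mul_mem k.2 hgG, ?_, i, ?_⟩
  · intro a ha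
    rw [Perm.mul_apply, ofSubtype_apply_of_not_mem]
    rwa [hg]
  · have h1 := congrArg (fun t : K => ofSubtype (t : Perm {a // a ∈ S})) hi
    simp only [Subgroup.coe_mul, Subgroup.coe_inv, Subgroup.coe_zpow, map_mul, map_inv,
      map_zpow] at h1
    change (ofSubtype y0) ^ i = ofSubtype k.1 * ofSubtype z0 * (ofSubtype k.1)⁻¹ at h1
    rw [ey, ez] at h1
    rw [h1, hz]
    group

theorem jordan_prime {α : Type*} [Fintype α] [DecidableEq α] {G : Subgroup (Perm α)}
    (hG : MulAction.IsPreprimitive G α) {p : ℕ} (hp : p.Prime) (hp3 : p + 3 ≤ Fintype.card α)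
    {y : Perm α} (hy : y.IsCycle) (hyp : y.support.card = p) (hyG : y ∈ G) :
    alternatingGroup α ≤ G := by
  obtain ⟨n, hn⟩ := Nat.exists_eq_add_of_le hp3
  have hcard : ((y.support : Set α)ᶜ).ncard = n + 2 + 1 := by
    apply Nat.add_left_cancel
    rw [Set.ncard_add_ncard_compl, Set.ncard_coe_finset, hyp, Nat.card_eq_fintype_card, hn]
    ring
  have hmulti : MulAction.IsMultiplyPreprimitive G α (n + 2 + 2) := by
    apply hG.isMultiplyPreprimitive hcard
    · rw [Nat.card_eq_fintype_card, hn]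
      have := hp.two_le
      omega
    · classical
      have := isPretransitive_of_isCycle_mem hy hyG
      apply MulAction.IsPreprimitive.of_prime_card
      convert! hp
      rw [Nat.card_eq_fintype_card, Fintype.card_subtype, ← hyp]
      apply congr_arg
      ext x
      simp [SubMulAction.mem_ofFixingSubgroup_iff]
  have htrans : MulAction.IsMultiplyPretransitive G α (n + 2 + 2) := inferInstance
  have htrans3 : MulAction.IsMultiplyPretransitive G α (n + 3) := by
    apply MulAction.isMultiplyPretransitive_of_le (n := n + 2 + 2) (by omega)
    rw [Nat.card_eq_fintype_card]
    have := hp.two_le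
    omega
  have hcardF : Fintype.card {a // a ∉ y.support} = n + 3 := by
    rw [Fintype.card_subtype_compl, Fintype.card_coe, hyp]; omega
  let e := (Fintype.equivFinOfCardEq hcardF).symm
  -- realise any permutation of the fixed points
  have real : ∀ s : Perm {a // a ∉ y.support}, ∃ u ∈ G,
      (∀ a : {a // a ∉ y.support}, u a = s a) ∧ ∃ i : ℤ, u * y * u⁻¹ = y ^ i := by
    intro s
    let e1 : Fin (n + 3) ↪ α := e.toEmbedding.trans (Function.Embedding.subtype _)
    let e2 : Fin (n + 3) ↪ α := (e.trans s).toEmbedding.trans (Function.Embedding.subtype _)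
    obtain ⟨g, hg⟩ := MulAction.exists_smul_eq G e1 e2
    have hg' : ∀ a : {a // a ∉ y.support}, (g : Perm α) a = s a := by
      intro a
      have h1 := DFunLike.congr_fun hg (e.symm a)
      simp [e1, e2] at h1
      exact h1
    have hgc : ∀ a, (g : Perm α) a ∈ y.support ↔ a ∈ y.support := by
      intro a
      constructor
      · intro h
        by_contra h'
        have := hg' ⟨a, h'⟩
        simp only at this
        rw [this] at h
        exact (s ⟨a, h'⟩).2 h
      · intro h
        by_contra h'
        have h1 := hg' (s.symm ⟨(g : Perm α) a, h'⟩)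
        rw [Equiv.apply_symm_apply] at h1
        have h2 := (g : Perm α).injective h1
        exact (s.symm ⟨(g : Perm α) a, h'⟩).2 (by rw [h2]; exact h)
    obtain ⟨u, huG, hu, i, hi⟩ := jordan_normalize hp hy hyp hyG g.2 hgc
    exact ⟨u, huG, fun a => (hu a a.2).trans (hg' a), i, hi⟩
  let a := e ⟨0, by omega⟩
  let b := e ⟨1, by omega⟩
  let c := e ⟨2, by omega⟩
  have hab : a ≠ b := fun h => by simpa [Fin.ext_iff] using e.injective h
  have hac : a ≠ c := fun h => by simpa [Fin.ext_iff] using e.injective h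
  have hbc : b ≠ c := fun h => by simpa [Fin.ext_iff] using e.injective h
  obtain ⟨u, huG, hu, i, hi⟩ := real (swap a b)
  obtain ⟨v, hvG, hv, j, hj⟩ := real (swap a c)
  have huv : u * v * y * (u * v)⁻¹ = v * u * y * (v * u)⁻¹ := by
    have h1 : u * v * y * (u * v)⁻¹ = y ^ (i * j) := by
      calc u * v * y * (u * v)⁻¹ = u * (v * y * v⁻¹) * u⁻¹ := by group
        _ = (u * y * u⁻¹) ^ j := by rw [hj, conj_zpow]
        _ = y ^ (i * j) := by rw [hi, zpow_mul]
    have h2 : v * u * y * (v * u)⁻¹ = y ^ (i * j) := by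
      calc v * u * y * (v * u)⁻¹ = v * (u * y * u⁻¹) * v⁻¹ := by group
        _ = (v * y * v⁻¹) ^ i := by rw [hi, conj_zpow]
        _ = y ^ (i * j) := by rw [hj, ← zpow_mul, mul_comm]
    rw [h1, h2]
  set w := (v * u)⁻¹ * (u * v) with hw
  have hwG : w ∈ G := G.mul_mem (G.inv_mem (G.mul_mem hvG huG)) (G.mul_mem huG hvG)
  have hwy : Commute w y := by
    have : w * y * w⁻¹ = y := by
      calc w * y * w⁻¹ = (v * u)⁻¹ * (u * v * y * (u * v)⁻¹) * (v * u) := by rw [hw]; group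
        _ = y := by rw [huv]; group
    rw [mul_inv_eq_iff_eq_mul] at this
    exact this
  obtain ⟨hw', m, hm⟩ := (hy.commute_iff).1 hwy
  set σ := swap a b * swap a c with hσ
  have hσ3 : (σ * σ).IsThreeCycle := (isThreeCycle_swap_mul_swap_same hab hac hbc).isThreeCycle_sq
  have hwF : ∀ s : {a // a ∉ y.support}, w s = (σ * σ) s := by
    intro s
    rw [hw, Perm.mul_apply, Perm.inv_eq_iff_eq]
    simp only [Perm.mul_apply, hu, hv, hσ]
    simp
  replace hm : y ^ m = ofSubtype (w.subtypePerm hw') := hm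
  have hmt : ∀ t ∈ y.support, (y ^ m) t = w t := by
    intro t ht
    rw [hm]
    exact ofSubtype_subtypePerm_of_mem hw' ht
  have hfin : w * (y ^ m)⁻¹ = ofSubtype (σ * σ) := by
    ext s
    by_cases hs : s ∈ y.support
    · rw [ofSubtype_apply_of_not_mem (p := fun a => a ∉ y.support) _ (by simpa using hs)]
      have ht : (y ^ m)⁻¹ s ∈ y.support := by
        rw [← zpow_neg]
        exact zpow_apply_mem_support.2 hs
      rw [Perm.mul_apply, ← hmt _ ht, ← Perm.mul_apply, mul_inv_cancel, Perm.one_apply]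
    · rw [ofSubtype_apply_of_mem (p := fun a => a ∉ y.support) _ hs, Perm.mul_apply]
      have : (y ^ m)⁻¹ s = s := by
        rw [← zpow_neg]
        exact zpow_apply_eq_self_of_apply_eq_self (notMem_support.1 hs) _
      rw [this]
      exact hwF ⟨s, hs⟩
  apply alternatingGroup_le_of_isPreprimitive_of_isThreeCycle_mem hG (g := ofSubtype (σ * σ))
  · unfold IsThreeCycle
    rw [cycleType_ofSubtype]
    exact hσ3
  · rw [← hfin]
    exact G.mul_mem hwG (G.inv_mem (G.zpow_mem hyG m))

theorem sameCycle_mem {α : Type*} [Finite α] {g : Perm α} {T : Set α}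
    (hT : ∀ a ∈ T, g a ∈ T) {z w : α} (hzw : g.SameCycle z w) (hz : z ∈ T) : w ∈ T := by
  obtain ⟨i, hi⟩ := hzw.exists_nat_pow_eq
  rw [← hi]
  clear hi
  induction i with
  | zero => simpa using hz
  | succ k ih => rw [pow_succ', Perm.mul_apply]; exact hT _ ih

theorem invariant_card {α : Type*} [Fintype α] [DecidableEq α] {g : Perm α} {T : Set α}
    (hT : ∀ a ∈ T, g a ∈ T) {z : α} (hz : z ∈ T) (hgz : z ∈ g.support) :
    ∃ k ∈ g.cycleType, k ≤ T.ncard := by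
  refine ⟨(g.cycleOf z).support.card, ?_, ?_⟩
  · rw [cycleType_def]
    exact Multiset.mem_map.2 ⟨g.cycleOf z, cycleOf_mem_cycleFactorsFinset_iff.2 hgz, rfl⟩
  · rw [← Set.ncard_coe_finset]
    apply Set.ncard_le_ncard _ T.toFinite
    intro w hw
    exact sameCycle_mem hT (mem_support_cycleOf_iff.1 hw).1 hz

theorem cycle_subset {α : Type*} [Fintype α] [DecidableEq α] {c : Perm α} (hc : c.IsCycle)
    {T : Set α} (hT : ∀ a ∈ T, c a ∈ T) {z : α} (hz : z ∈ T) (hcz : z ∈ c.support) :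
    (c.support : Set α) ⊆ T := by
  intro w hw
  exact sameCycle_mem hT (hc.sameCycle (mem_support.1 hcz) (mem_support.1 hw)) hz

theorem orbit_invariant {α : Type*} {H : Subgroup (Perm α)} {g : Perm α} (hg : g ∈ H) (a : α) :
    ∀ b ∈ MulAction.orbit H a, g b ∈ MulAction.orbit H a := by
  rintro _ ⟨h, rfl⟩
  exact ⟨⟨g, hg⟩ * h, rfl⟩

theorem orbit_compl_invariant {α : Type*} {H : Subgroup (Perm α)} {g : Perm α} (hg : g ∈ H)
    (a : α) : ∀ b ∈ (MulAction.orbit H a)ᶜ, g b ∈ (MulAction.orbit H a)ᶜ := by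
  intro b hb h
  apply hb
  have := orbit_invariant (H.inv_mem hg) a _ h
  simpa using this

theorem support_eq_univ_of_sum {α : Type*} [Fintype α] [DecidableEq α] {x : Perm α}
    (h : x.cycleType.sum = Fintype.card α) (a : α) : a ∈ x.support := by
  rw [sum_cycleType] at h
  rw [(Finset.card_eq_iff_eq_univ _).1 h]
  simp

theorem transitive_of_cycles {α : Type*} [Fintype α] [DecidableEq α] {H : Subgroup (Perm α)}
    {x : Perm α} (hx : x ∈ H) (hs : x.cycleType.sum = Fintype.card α) (a : α) {K : ℕ}
    (hK : K ≤ (MulAction.orbit H a).ncard) (hk : ∀ k ∈ x.cycleType, Fintype.card α < K + k) :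
    MulAction.IsPretransitive H α := by
  rw [MulAction.isPretransitive_iff_orbit_eq_univ (G := H) a]
  by_contra hne
  obtain ⟨z, hz⟩ := (Set.ne_univ_iff_exists_notMem _).1 hne
  obtain ⟨k, hk1, hk2⟩ := invariant_card (orbit_compl_invariant hx a)
    (z := z) hz (support_eq_univ_of_sum hs z)
  have h1 := hk k hk1
  have h2 := Set.ncard_add_ncard_compl (MulAction.orbit H a)
  rw [Nat.card_eq_fintype_card] at h2
  omega

theorem block_contains_cycle {α : Type*} [Fintype α] [DecidableEq α] {H : Subgroup (Perm α)}
    {c : Perm α} (hcH : c ∈ H) (hc : c.IsCycle) (hq : (c.support.card).Prime) {B : Set α}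
    (hB : MulAction.IsBlock H B) {s : α} (hsB : s ∈ B) (hs : s ∈ c.support)
    (hnt : B.Nontrivial) : (c.support : Set α) ⊆ B := by
  have step : ∀ g : Perm α, g ∈ H → ∀ u ∈ B, g u ∈ B → ∀ v ∈ B, g v ∈ B := by
    intro g hg u hu hgu v hv
    have h := (MulAction.isBlock_iff_smul_eq_of_mem.1 hB) (g := (⟨g, hg⟩ : H)) hu hgu
    rw [← h]
    exact Set.smul_mem_smul_set hv
  by_cases hex : ∃ u ∈ B, c u ∈ B
  · obtain ⟨u, hu, hcu⟩ := hex
    exact cycle_subset hc (step c hcH u hu hcu) hsB hs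
  · push Not at hex
    have hBs : ∀ u ∈ B, u ∈ c.support := by
      intro u hu
      rw [mem_support]
      intro h
      apply hex u hu
      rwa [h]
    obtain ⟨b, hb, hbs⟩ := hnt.exists_ne s
    obtain ⟨i, hi⟩ := hc.exists_pow_eq (mem_support.1 hs) (mem_support.1 (hBs b hb))
    have hinv := step (c ^ i) (H.pow_mem hcH i) s hsB (by rw [hi]; exact hb)
    have hcop : Nat.Coprime i (orderOf c) := by
      rw [hc.orderOf, Nat.coprime_comm, hq.coprime_iff_not_dvd, ← hc.orderOf]
      intro hd
      rw [orderOf_dvd_iff_pow_eq_one] at hd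
      rw [hd] at hi
      exact hbs hi.symm
    obtain ⟨m, hm⟩ := exists_pow_eq_self_of_coprime hcop
    exfalso
    apply hex s hsB
    have : ∀ k : ℕ, ((c ^ i) ^ k) s ∈ B := by
      intro k
      induction k with
      | zero => simpa using hsB
      | succ k ih => rw [pow_succ', Perm.mul_apply]; exact hinv _ ih
    have := this m
    rwa [hm] at this

theorem preprimitive_of_cycle {α : Type*} [Fintype α] [DecidableEq α] {H : Subgroup (Perm α)}
    (ht : MulAction.IsPretransitive H α)
    {c : Perm α} (hcH : c ∈ H) (hc : c.IsCycle) (hq : (c.support.card).Prime)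
    (hB : ∀ B : Set α, MulAction.IsBlock H B → (c.support : Set α) ⊆ B →
      B.ncard ∣ Fintype.card α → c.support.card ≤ B.ncard → B.ncard < Fintype.card α → False) :
    MulAction.IsPreprimitive H α := by
  obtain ⟨s, hs⟩ := hc.nonempty_support
  apply MulAction.IsPreprimitive.of_isTrivialBlock_base s
  intro B hsB hBl
  rcases B.subsingleton_or_nontrivial with h | h
  · exact Or.inl h
  · right
    by_contra hne
    have hsub := block_contains_cycle hcH hc hq hBl hsB hs h
    apply hB B hBl hsub
    · rw [← Nat.card_eq_fintype_card]
      exact hBl.ncard_dvd_card h.nonempty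
    · rw [← Set.ncard_coe_finset]
      exact Set.ncard_le_ncard hsub B.toFinite
    · rw [← Nat.card_eq_fintype_card]
      apply lt_of_le_of_ne (Set.ncard_le_card B)
      intro h'
      exact hne (Set.eq_univ_iff_ncard _ |>.2 h')

theorem isCycle_of_cycleType_singleton {α : Type*} [Fintype α] [DecidableEq α] {y : Perm α}
    {p : ℕ} (h : y.cycleType = {p}) : y.IsCycle ∧ y.support.card = p := by
  constructor
  · rw [← card_cycleType_eq_one, h]; rfl
  · rw [← sum_cycleType, h]; simp

theorem orbit_ge_cycle {α : Type*} [Fintype α] [DecidableEq α] {H : Subgroup (Perm α)} {c : Perm α}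
    (hcH : c ∈ H) (hc : c.IsCycle) : ∃ a : α, c.support.card ≤ (MulAction.orbit H a).ncard := by
  obtain ⟨s, hs⟩ := hc.nonempty_support
  refine ⟨s, ?_⟩
  rw [← Set.ncard_coe_finset]
  exact Set.ncard_le_ncard (cycle_subset hc (orbit_invariant hcH s) (MulAction.mem_orbit_self s) hs)
    (Set.toFinite _)

theorem reduction {n : ℕ} (mx my : Multiset ℕ) (hmx : mx.sum ≤ n ∧ ∀ a ∈ mx, 2 ≤ a)
    (hmy : my.sum ≤ n ∧ ∀ a ∈ my, 2 ≤ a) (ex : Even (mx.sum + mx.card))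
    (ey : Even (my.sum + my.card)) (hp : my.lcm.Prime)
    (key : ∀ x y : Perm (Fin n), x.cycleType = mx → y.cycleType = my →
      ∀ H : Subgroup (Perm (Fin n)), x ∈ H → y ∈ H → alternatingGroup (Fin n) ≤ H) :
    ∃ x y : alternatingGroup (Fin n), (orderOf y).Prime ∧
      ∀ g h : alternatingGroup (Fin n),
        Subgroup.closure {g⁻¹ * x * g, h⁻¹ * y * h} = ⊤ := by
  obtain ⟨x, hx⟩ := (exists_with_cycleType_iff (α := Fin n) (m := mx)).2 (by simpa using hmx)
  obtain ⟨y, hy⟩ := (exists_with_cycleType_iff (α := Fin n) (m := my)).2 (by simpa using hmy)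
  have hxA : x ∈ alternatingGroup (Fin n) := by
    rw [mem_alternatingGroup, sign_of_cycleType, hx, ex.neg_one_pow]
  have hyA : y ∈ alternatingGroup (Fin n) := by
    rw [mem_alternatingGroup, sign_of_cycleType, hy, ey.neg_one_pow]
  refine ⟨⟨x, hxA⟩, ⟨y, hyA⟩, ?_, ?_⟩
  · rw [← Subgroup.orderOf_coe]
    change (orderOf y).Prime
    rw [← lcm_cycleType, hy]
    exact hp
  · intro g h
    have conj : ∀ (g x : Perm (Fin n)), (g⁻¹ * x * g).cycleType = x.cycleType := by
      intro g x
      have := cycleType_conj (σ := x) (τ := g⁻¹)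
      rwa [inv_inv] at this
    set C := Subgroup.closure {g⁻¹ * (⟨x, hxA⟩ : alternatingGroup (Fin n)) * g,
      h⁻¹ * (⟨y, hyA⟩ : alternatingGroup (Fin n)) * h} with hC
    have hle := key _ _ ((conj (g : Perm (Fin n)) x).trans hx)
      ((conj (h : Perm (Fin n)) y).trans hy)
      (C.map (alternatingGroup (Fin n)).subtype)
      ⟨_, Subgroup.subset_closure (Or.inl rfl), rfl⟩
      ⟨_, Subgroup.subset_closure (Or.inr rfl), rfl⟩
    rw [eq_top_iff]
    intro z _
    obtain ⟨w, hw, hwz⟩ := hle z.2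
    have : w = z := Subtype.ext hwz
    rwa [← this]

theorem case_prime {n : ℕ} (hn : n.Prime) (h5 : 5 ≤ n) (x y : Perm (Fin n))
    (hx : x.cycleType = {3}) (hy : y.cycleType = {n}) (H : Subgroup (Perm (Fin n)))
    (hxH : x ∈ H) (hyH : y ∈ H) : alternatingGroup (Fin n) ≤ H := by
  have ht : MulAction.IsPretransitive H (Fin n) := by
    apply transitive_of_cycles hyH (by simp [hy]) (⟨0, by omega⟩ : Fin n) (K := 1)
    · exact (Set.ncard_pos (Set.toFinite _)).2 (MulAction.nonempty_orbit _)
    · simp [hy]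
  have hpr : MulAction.IsPreprimitive H (Fin n) :=
    MulAction.IsPreprimitive.of_prime_card (by simpa using hn)
  exact alternatingGroup_le_of_isPreprimitive_of_isThreeCycle_mem hpr (g := x) hx hxH

theorem case_pp {p : ℕ} (hp : p.Prime) (h5 : 5 ≤ p) (x y : Perm (Fin (2 * p)))
    (hx : x.cycleType = {3, 2 * p - 3}) (hy : y.cycleType = {p, p})
    (H : Subgroup (Perm (Fin (2 * p))))
    (hxH : x ∈ H) (hyH : y ∈ H) : alternatingGroup (Fin (2 * p)) ≤ H := by
  obtain ⟨c, d, hcd, hdisj, hc, hc3⟩ :=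
    mem_cycleType_iff.1 (show 3 ∈ x.cycleType by rw [hx]; simp)
  have hdt : d.cycleType = {2 * p - 3} := by
    rw [hcd, hdisj.cycleType_mul, hc.cycleType, hc3] at hx
    exact (Multiset.add_right_inj (s := {3})).1 (by simpa using hx)
  obtain ⟨hd, hdc⟩ := isCycle_of_cycleType_singleton hdt
  have hcH : c ∈ H := by
    have h1 : x ^ (2 * p - 3) = c ^ (2 * p - 3) := by
      rw [hcd, hdisj.commute.mul_pow, ← hdc, ← hd.orderOf, pow_orderOf_eq_one, mul_one]
    have hcop : Nat.Coprime (2 * p - 3) (orderOf c) := by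
      rw [hc.orderOf, hc3, Nat.coprime_comm, Nat.prime_three.coprime_iff_not_dvd]
      intro h
      have h2 : 3 ∣ 2 * p := by omega
      have h3 : 3 ∣ p := (Nat.Coprime.dvd_mul_left (by norm_num)).1 h2
      have := (Nat.prime_dvd_prime_iff_eq Nat.prime_three hp).1 h3
      omega
    obtain ⟨m, hm⟩ := exists_pow_eq_self_of_coprime hcop
    rw [← hm, ← h1]
    exact H.pow_mem (H.pow_mem hxH _) _
  have hsx : x.cycleType.sum = Fintype.card (Fin (2 * p)) := by
    rw [hx]; simp; omega
  have hsy : y.cycleType.sum = Fintype.card (Fin (2 * p)) := by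
    rw [hy]; simp; omega
  have big : ∀ T : Set (Fin (2 * p)), (∀ a ∈ T, x a ∈ T) → 3 < T.ncard → 2 * p - 3 ≤ T.ncard := by
    intro T hT h3
    obtain ⟨w, hw, hwc⟩ := Set.exists_mem_notMem_of_ncard_lt_ncard
      (s := (c.support : Set (Fin (2 * p)))) (t := T) (by rwa [Set.ncard_coe_finset, hc3])
    have hwd : w ∈ d.support := by
      have := support_eq_univ_of_sum hsx w
      rw [hcd, hdisj.support_mul, Finset.mem_union] at this
      rcases this with h | h
      · exact absurd h hwc
      · exact h
    rw [← hdc, ← Set.ncard_coe_finset]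
    apply Set.ncard_le_ncard _ T.toFinite
    intro v hv
    have hsc : d.SameCycle w v := hd.sameCycle (mem_support.1 hwd) (mem_support.1 hv)
    apply sameCycle_mem hT _ hw
    obtain ⟨i, hi⟩ := hsc
    refine ⟨i, ?_⟩
    rw [hcd, hdisj.commute.mul_zpow, Perm.mul_apply, hi]
    apply zpow_apply_eq_self_of_apply_eq_self
    rcases hdisj v with h | h
    · exact h
    · exact absurd h (mem_support.1 hv)
  obtain ⟨s, hs⟩ := hc.nonempty_support
  have ht : MulAction.IsPretransitive H (Fin (2 * p)) := by
    apply transitive_of_cycles hyH hsy s (K := 2 * p - 3)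
    · apply big _ (orbit_invariant hxH s)
      obtain ⟨k, hk, hk'⟩ := invariant_card (orbit_invariant hyH s) (MulAction.mem_orbit_self s)
        (support_eq_univ_of_sum hsy s)
      simp [hy] at hk
      omega
    · simp [hy]; omega
  have hpr : MulAction.IsPreprimitive H (Fin (2 * p)) := by
    apply preprimitive_of_cycle ht hcH hc (by rw [hc3]; exact Nat.prime_three)
    intro B hB hsub hdvd hge hlt
    simp only [Fintype.card_fin] at hdvd hlt
    rw [hc3] at hge
    have hBx : ∀ a ∈ B, x a ∈ B := by
      intro a ha
      have hxs : x s ∈ B := by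
        rw [hcd, Perm.mul_apply]
        have : d s = s := by
          rcases hdisj s with h | h
          · exact absurd h (mem_support.1 hs)
          · exact h
        rw [this]
        apply hsub
        exact apply_mem_support.2 hs
      have h := (MulAction.isBlock_iff_smul_eq_of_mem.1 hB) (g := (⟨x, hxH⟩ : H)) (hsub hs) hxs
      rw [← h]
      exact Set.smul_mem_smul_set ha
    have hBp : B.ncard = p := by
      obtain ⟨j, hj⟩ := hdvd
      have hpj : p ∣ B.ncard * j := ⟨2, by omega⟩
      rcases hp.dvd_mul.1 hpj with ⟨i, hi⟩ | ⟨i, hi⟩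
      · have : i < 2 := by
          by_contra h
          push Not at h
          nlinarith
        interval_cases i <;> omega
      · exfalso
        have : B.ncard * i = 2 := by
          apply Nat.eq_of_mul_eq_mul_left hp.pos
          calc p * (B.ncard * i) = B.ncard * j := by rw [hi]; ring
            _ = p * 2 := by rw [← hj, mul_comm]
        have : B.ncard ∣ 2 := ⟨i, this.symm⟩
        have := Nat.le_of_dvd (by norm_num) this
        omega
    have := big B hBx (by omega)
    omega
  exact alternatingGroup_le_of_isPreprimitive_of_isThreeCycle_mem hpr (g := c)
    (card_support_eq_three_iff.1 hc3) hcH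

theorem case_odd {m p : ℕ} (hm : 4 ≤ m) (hp : p.Prime) (h1 : m ≤ p) (h2 : p + 3 ≤ 2 * m + 1)
    (x y : Perm (Fin (2 * m + 1)))
    (hx : x.cycleType = {2 * m + 1}) (hy : y.cycleType = {p})
    (H : Subgroup (Perm (Fin (2 * m + 1))))
    (hxH : x ∈ H) (hyH : y ∈ H) : alternatingGroup (Fin (2 * m + 1)) ≤ H := by
  have ht : MulAction.IsPretransitive H (Fin (2 * m + 1)) := by
    apply transitive_of_cycles hxH (by simp [hx]) (0 : Fin (2 * m + 1)) (K := 1)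
    · exact (Set.ncard_pos (Set.toFinite _)).2 (MulAction.nonempty_orbit _)
    · simp [hx]
  obtain ⟨hyc, hyp⟩ := isCycle_of_cycleType_singleton hy
  have hpr : MulAction.IsPreprimitive H (Fin (2 * m + 1)) := by
    apply preprimitive_of_cycle ht hyH hyc (by rw [hyp]; exact hp)
    intro B _ _ hdvd hge hlt
    simp only [Fintype.card_fin] at hdvd hlt
    obtain ⟨j, hj⟩ := hdvd
    rw [hyp] at hge
    have : j < 3 := by
      by_contra h
      push Not at h
      nlinarith
    interval_cases j <;> omega
  exact jordan_prime hpr hp (by simpa using h2) hyc hyp hyH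

theorem preprimitive_big {α : Type*} [Fintype α] [DecidableEq α] {H : Subgroup (Perm α)}
    {x y : Perm α} (hxH : x ∈ H) (hyH : y ∈ H) (hs : x.cycleType.sum = Fintype.card α)
    {p : ℕ} (hp : p.Prime) (hy : y.cycleType = {p}) (h2 : Fintype.card α < 2 * p)
    (hk : ∀ k ∈ x.cycleType, Fintype.card α < p + k) :
    MulAction.IsPreprimitive H α := by
  obtain ⟨hyc, hyp⟩ := isCycle_of_cycleType_singleton hy
  obtain ⟨a, ha⟩ := orbit_ge_cycle hyH hyc
  rw [hyp] at ha
  have ht := transitive_of_cycles hxH hs a ha hk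
  apply preprimitive_of_cycle ht hyH hyc (by rw [hyp]; exact hp)
  intro B _ _ hdvd hge hlt
  obtain ⟨j, hj⟩ := hdvd
  rw [hyp] at hge
  have : j < 2 := by
    by_contra h
    push Not at h
    nlinarith
  interval_cases j <;> omega

theorem case_even {m p : ℕ} (hp : p.Prime) (h1 : m < p) (h2 : p + 3 ≤ 2 * m)
    (x y : Perm (Fin (2 * m)))
    (hx : x.cycleType = {m, m}) (hy : y.cycleType = {p})
    (H : Subgroup (Perm (Fin (2 * m))))
    (hxH : x ∈ H) (hyH : y ∈ H) : alternatingGroup (Fin (2 * m)) ≤ H := by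
  obtain ⟨hyc, hyp⟩ := isCycle_of_cycleType_singleton hy
  have hpr : MulAction.IsPreprimitive H (Fin (2 * m)) := by
    apply preprimitive_big hxH hyH (by simp [hx]; omega) hp hy (by simp; omega)
    simp [hx]; omega
  exact jordan_prime hpr hp (by simpa using h2) hyc hyp hyH

theorem case_six (x y : Perm (Fin 6))
    (hx : x.cycleType = {4, 2}) (hy : y.cycleType = {5}) (H : Subgroup (Perm (Fin 6)))
    (hxH : x ∈ H) (hyH : y ∈ H) : alternatingGroup (Fin 6) ≤ H := by
  have hpr : MulAction.IsPreprimitive H (Fin 6) := by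
    apply preprimitive_big hxH hyH (by simp [hx]) Nat.prime_five hy (by simp)
    simp [hx]
  obtain ⟨w, hw, hw3⟩ := six_words x y hx hy H hxH hyH
  exact alternatingGroup_le_of_isPreprimitive_of_isThreeCycle_mem hpr hw3 hw

/-- For each integer `n ≥ 5`, the alternating group `A_n` is generated invariably by
two elements, at least one of which has prime order. -/
theorem alternating_invariably_generated_two_elements
    (n : ℕ) (hn : 5 ≤ n) :
    ∃ x y : alternatingGroup (Fin n), (orderOf y).Prime ∧
      ∀ g h : alternatingGroup (Fin n),
        Subgroup.closure {g⁻¹ * x * g, h⁻¹ * y * h} = ⊤ := by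
  by_cases h5 : n = 5
  · subst h5
    exact reduction {3} {5} (by simp) (by simp) (by decide) (by decide) (by norm_num)
      (case_prime (by norm_num) (by norm_num))
  by_cases h7 : n = 7
  · subst h7
    exact reduction {3} {7} (by simp) (by simp) (by decide) (by decide) (by norm_num)
      (case_prime (by norm_num) (by norm_num))
  by_cases h6 : n = 6
  · subst h6
    exact reduction {4, 2} {5} (by simp) (by simp) (by decide) (by decide) (by norm_num) case_six
  rcases Nat.even_or_odd' n with ⟨m, rfl | rfl⟩
  · obtain ⟨p, hp, h1, h2⟩ := Nat.exists_prime_lt_and_le_two_mul (m - 1) (by omega)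
    have hodd : p % 2 = 1 := by
      rcases hp.eq_two_or_odd with h | h
      · omega
      · exact h
    rcases Nat.lt_or_ge m p with hmp | hmp
    · refine reduction {m, m} {p} ?_ ?_ ?_ ?_ ?_ (case_even hp hmp (by omega))
      · simp; omega
      · simp; omega
      · simp [Nat.even_iff]; omega
      · simp [Nat.even_iff]; omega
      · simpa using hp
    · have : m = p := by omega
      subst this
      refine reduction {3, 2 * m - 3} {m, m} ?_ ?_ ?_ ?_ ?_ (case_pp hp (by omega))
      · simp; omega
      · simp; omega
      · simp [Nat.even_iff]; omega
      · simp [Nat.even_iff]; omega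
      · simpa using hp
  · obtain ⟨p, hp, h1, h2⟩ := Nat.exists_prime_lt_and_le_two_mul (m - 1) (by omega)
    have hodd : p % 2 = 1 := by
      rcases hp.eq_two_or_odd with h | h
      · omega
      · exact h
    refine reduction {2 * m + 1} {p} ?_ ?_ ?_ ?_ ?_
      (case_odd (by omega) hp (by omega) (by omega))
    · simp; omega
    · simp; omega
    · simp only [Multiset.sum_singleton, Multiset.card_singleton, Nat.even_iff]; omega
    · simp only [Multiset.sum_singleton, Multiset.card_singleton, Nat.even_iff]; omega
    · simpa using hp
end

section
/- Let n > 7 be an integer and let p be a prime with n/2 < p < n − 2. Let y ∈ A_n be an element of order p, and let x ∈ A_n be a permutation whose cycle type is {n} if n is odd, and {n/2, n/2} if n is even. Then for all g, h ∈ A_n, the subgroup of A_n generated by g⁻¹xg and h⁻¹yh is all of A_n. -/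
open Equiv Equiv.Perm MulAction in
theorem aux_sylow {n p : ℕ} (hp : p.Prime) (hn : n < 2 * p) (K : Subgroup (Perm (Fin n)))
    (y z : Perm (Fin n)) (hy : y ∈ K) (hz : z ∈ K) (oy : orderOf y = p) (oz : orderOf z = p) :
    ∃ k ∈ K, k * z * k⁻¹ ∈ Subgroup.zpowers y := by
  have : Fact p.Prime := ⟨hp⟩
  have hfac : (Nat.card K).factorization p = 1 := by
    apply le_antisymm
    · have h1 : Nat.card K ∣ n.factorial := by
        have := Subgroup.card_subgroup_dvd_card K
        rwa [Nat.card_perm, Nat.card_fin] at this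
      have h2 := (Nat.factorization_le_iff_dvd Nat.card_pos.ne' (Nat.factorial_ne_zero n)).2 h1 p
      refine h2.trans ?_
      rw [Nat.factorization_def _ hp]
      have hlog : Nat.log p n < 2 := by
        apply Nat.log_lt_of_lt_pow'
        · omega
        · have := hp.two_le
          nlinarith
      rw [padicValNat_factorial hlog]
      simp only [Nat.Ico_succ_singleton, Finset.sum_singleton, pow_one]
      have : n / p < 2 := Nat.div_lt_of_lt_mul (by omega)
      omega
    · have : p ∣ Nat.card K := by
        have := Subgroup.orderOf_dvd_natCard K hy
        rwa [oy] at this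
      exact (hp.dvd_iff_one_le_factorization Nat.card_pos.ne').1 this
  let P : Sylow p K := Sylow.ofCard (Subgroup.zpowers ⟨y, hy⟩) (by
    rw [hfac, Nat.card_zpowers, Subgroup.orderOf_mk, oy, pow_one])
  let Q : Sylow p K := Sylow.ofCard (Subgroup.zpowers ⟨z, hz⟩) (by
    rw [hfac, Nat.card_zpowers, Subgroup.orderOf_mk, oz, pow_one])
  obtain ⟨k, hk⟩ := exists_smul_eq K Q P
  refine ⟨k, k.2, ?_⟩
  have hzQ : (⟨z, hz⟩ : K) ∈ (Q : Subgroup K) := Subgroup.mem_zpowers _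
  have h3 : k * ⟨z, hz⟩ * k⁻¹ ∈ (P : Subgroup K) := by
    rw [← hk, Sylow.coe_subgroup_smul]
    exact Subgroup.smul_mem_pointwise_smul _ (MulAut.conj k) _ hzQ
  obtain ⟨i, hi⟩ := Subgroup.mem_zpowers_iff.1 (show _ ∈ Subgroup.zpowers (⟨y, hy⟩ : K) from h3)
  refine ⟨i, ?_⟩
  simpa using congrArg Subtype.val hi

open Equiv Equiv.Perm MulAction in
/-- lifting a permutation of the fixed points of `y` to the normalizer of `⟨y⟩` -/
theorem aux_lift {n p : ℕ} (hp : p.Prime) (hn : n < 2 * p) (G : Subgroup (Perm (Fin n)))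
    (y : Perm (Fin n)) (hy : y ∈ G) (oy : orderOf y = p)
    (hG : IsMultiplyPretransitive G (Fin n) (y.supportᶜ : Finset (Fin n)).card)
    (σ : Perm (Fin n)) (hσ : ∀ z, y z = z → y (σ z) = σ z) :
    ∃ s ∈ G, (∀ z, y z = z → s z = σ z) ∧ s * y * s⁻¹ ∈ Subgroup.zpowers y := by
  let e := (y.supportᶜ : Finset (Fin n)).equivFin.symm
  let f : Fin (y.supportᶜ : Finset (Fin n)).card ↪ Fin n :=
    e.toEmbedding.trans (Function.Embedding.subtype _)
  obtain ⟨g, hg⟩ := exists_smul_eq G f (f.trans σ.toEmbedding)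
  have hg' : ∀ z, y z = z → (g : Perm (Fin n)) z = σ z := by
    intro z hz
    have hz' : z ∈ (y.supportᶜ : Finset (Fin n)) := by simpa using hz
    have := DFunLike.congr_fun hg (e.symm ⟨z, hz'⟩)
    simpa [f] using! this
  have hσ' : ∀ z, y z = z → y (σ⁻¹ z) = σ⁻¹ z := by
    intro z hz
    have hmap : ∀ w ∈ (y.supportᶜ : Finset (Fin n)), σ w ∈ (y.supportᶜ : Finset (Fin n)) := by
      intro w hw
      simp at hw ⊢
      exact hσ w hw
    have him : (y.supportᶜ : Finset (Fin n)).image σ = y.supportᶜ :=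
      Finset.eq_of_subset_of_card_le (Finset.image_subset_iff.2 hmap)
        (by rw [Finset.card_image_of_injective _ σ.injective])
    have hz' : z ∈ (y.supportᶜ : Finset (Fin n)) := by simpa using hz
    rw [← him] at hz'
    obtain ⟨w, hw, rfl⟩ := Finset.mem_image.1 hz'
    simpa using hw
  have hginv : ∀ z, y z = z → (g : Perm (Fin n))⁻¹ z = σ⁻¹ z := by
    intro z hz
    rw [Perm.inv_eq_iff_eq, hg' _ (hσ' z hz)]
    simp
  -- pointwise stabilizer
  let K : Subgroup (Perm (Fin n)) :=
    G ⊓ fixingSubgroup (Perm (Fin n)) {z | y z = z}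
  have hK : ∀ k, k ∈ K ↔ k ∈ G ∧ ∀ z, y z = z → k z = z := by
    intro k
    simp [K, Subgroup.mem_inf, mem_fixingSubgroup_iff]
  obtain ⟨k, hk, hky⟩ := aux_sylow hp hn K y (g * y * (g : Perm (Fin n))⁻¹)
    ((hK _).2 ⟨hy, fun z hz => hz⟩)
    ((hK _).2 ⟨G.mul_mem (G.mul_mem g.2 hy) (G.inv_mem g.2), fun z hz => by
      simp only [Perm.mul_apply]
      rw [hginv z hz, hσ' z hz, ← hginv z hz]; simp⟩) oy
    (by rw [← oy]; exact (MulAut.conj (g : Perm (Fin n))).orderOf_eq y)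
  refine ⟨k * g, G.mul_mem ((hK k).1 hk).1 g.2, ?_, ?_⟩
  · intro z hz
    rw [Perm.mul_apply, hg' z hz, ((hK k).1 hk).2 _ (hσ z hz)]
  · convert hky using 1
    group

open Equiv Equiv.Perm MulAction in
theorem aux_jordan {n p : ℕ} (hp : p.Prime) (hn : n < 2 * p) (hp3 : p + 3 ≤ n)
    (G : Subgroup (Perm (Fin n))) (hprim : IsPreprimitive G (Fin n))
    (y : Perm (Fin n)) (hy : y ∈ G) (oy : orderOf y = p) (hyc : y.IsCycle)
    (hG : IsMultiplyPretransitive G (Fin n) (y.supportᶜ : Finset (Fin n)).card) :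
    alternatingGroup (Fin n) ≤ G := by
  have hcard : 2 < (y.supportᶜ : Finset (Fin n)).card := by
    rw [Finset.card_compl, ← hyc.orderOf, oy, Fintype.card_fin]; omega
  obtain ⟨a, b, c, ha, hb, hc, hab, hac, hbc⟩ := Finset.two_lt_card_iff.1 hcard
  simp only [Finset.mem_compl, notMem_support] at ha hb hc
  have hσ : ∀ u v, y u = u → y v = v → ∀ z, y z = z → y (swap u v z) = swap u v z := by
    intro u v hu hv z hz
    grind
  obtain ⟨s, hs, hs1, i, hi⟩ := aux_lift hp hn G y hy oy hG (swap a b) (hσ a b ha hb)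
  obtain ⟨t, ht, ht1, j, hj⟩ := aux_lift hp hn G y hy oy hG (swap a c) (hσ a c ha hc)
  have hi : s * y * s⁻¹ = y ^ i := hi.symm
  have hj : t * y * t⁻¹ = y ^ j := hj.symm
  have hst : s * t * y = y ^ (i * j) * (s * t) := by
    have h1 : s * y ^ j * s⁻¹ = y ^ (i * j) := by rw [zpow_mul, ← hi, conj_zpow]
    rw [← h1, ← hj]; group
  have hts : t * s * y = y ^ (i * j) * (t * s) := by
    have h1 : t * y ^ i * t⁻¹ = y ^ (i * j) := by rw [mul_comm, zpow_mul, ← hj, conj_zpow]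
    rw [← h1, ← hi]; group
  set w := (t * s)⁻¹ * (s * t) with hw
  have hwG : w ∈ G := G.mul_mem (G.inv_mem (G.mul_mem ht hs)) (G.mul_mem hs ht)
  have hwy : Commute w y := by
    have h1 : y = (t * s)⁻¹ * (y ^ (i * j) * (t * s)) := by rw [← hts]; group
    calc w * y = (t * s)⁻¹ * (s * t * y) := by rw [hw]; group
      _ = (t * s)⁻¹ * (y ^ (i * j) * (t * s)) * w := by rw [hst, hw]; group
      _ = y * w := by rw [← h1]
  set d : Perm (Fin n) := (swap a b * swap a c) * (swap a b * swap a c) with hd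
  have hd3 : d.IsThreeCycle := (isThreeCycle_swap_mul_swap_same hab hac hbc).isThreeCycle_sq
  have hwd : ∀ z, y z = z → w z = d z := by
    intro z hz
    have e1 := hσ a c ha hc z hz
    have e2 := hσ a b ha hb _ e1
    have e3 := hσ a c ha hc _ e2
    have e4 := hσ a b ha hb _ e3
    rw [hw, Perm.mul_apply, Perm.inv_eq_iff_eq]
    simp only [Perm.mul_apply, hd]
    rw [ht1 z hz, hs1 _ e1, hs1 _ e4, swap_apply_self, ht1 _ e3, swap_apply_self]
  have hdy : ∀ z, y z ≠ z → d z = z := by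
    intro z hz
    have h1 : z ≠ a := by rintro rfl; exact hz ha
    have h2 : z ≠ b := by rintro rfl; exact hz hb
    have h3 : z ≠ c := by rintro rfl; exact hz hc
    simp [hd, swap_apply_of_ne_of_ne, h1, h2, h3]
  obtain ⟨u, hu, hu'⟩ := id hyc
  have hwu : y (w u) ≠ w u := by
    intro h
    have : w (y u) = y (w u) := DFunLike.congr_fun hwy u
    rw [h] at this
    exact hu (w.injective this)
  obtain ⟨m, hm⟩ := hu' hwu
  have hdis : Disjoint d y := fun z => by
    by_cases hz : y z = z
    · exact Or.inr hz
    · exact Or.inl (hdy z hz)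
  clear_value w d
  have hwe : w = d * y ^ m := by
    ext1 z
    by_cases hz : y z = z
    · rw [Perm.mul_apply, zpow_apply_eq_self_of_apply_eq_self hz, hwd z hz]
    · obtain ⟨l, rfl⟩ := hu' hz
      have h1 : w ((y ^ l) u) = (y ^ l) (w u) :=
        DFunLike.congr_fun (hwy.zpow_right l) u
      have h2 : (y ^ m) ((y ^ l) u) = (y ^ l) ((y ^ m) u) :=
        DFunLike.congr_fun (Commute.zpow_zpow (Commute.refl y) m l) u
      have h3 : y ((y ^ l) (w u)) ≠ (y ^ l) (w u) := by
        intro h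
        rw [← h1] at h
        have h4 : w (y ((y ^ l) u)) = y (w ((y ^ l) u)) := DFunLike.congr_fun hwy _
        rw [h] at h4
        exact hz (w.injective h4)
      rw [Perm.mul_apply, h2, hm, hdy _ h3, h1]
  have hwp : w ^ p = d ^ p := by
    have h1 : Commute d (y ^ m) := hdis.commute.zpow_right m
    rw [hwe, h1.mul_pow, ← zpow_natCast (y ^ m), zpow_comm, zpow_natCast, ← oy,
      pow_orderOf_eq_one, one_zpow, mul_one]
  have hdG : d ^ p ∈ G := hwp ▸ G.pow_mem hwG p
  have hcop : Nat.Coprime (orderOf d) p := by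
    rw [hd3.orderOf, Nat.coprime_primes Nat.prime_three hp]
    omega
  obtain ⟨q, hq⟩ := exists_pow_eq_self_of_coprime hcop.symm
  exact alternatingGroup_le_of_isPreprimitive_of_isThreeCycle_mem hprim hd3
    (hq ▸ G.pow_mem hdG q)

open Equiv Equiv.Perm MulAction in
theorem aux_main {n p : ℕ} (hp : p.Prime) (hn : n < 2 * p) (hp3 : p + 3 ≤ n)
    (G : Subgroup (Perm (Fin n)))
    (x y : Perm (Fin n)) (hx : x ∈ G) (hy : y ∈ G) (oy : orderOf y = p)
    (hx1 : x.cycleType.sum = n) (hx2 : ∀ c ∈ x.cycleType, n ≤ 2 * c) :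
    alternatingGroup (Fin n) ≤ G := by
  have hyc : y.IsCycle := isCycle_of_prime_order' (oy.symm ▸ hp) (by simpa [oy] using hn)
  have hycard : y.support.card = p := by rw [← hyc.orderOf, oy]
  have hxs : x.support = Finset.univ := by
    rw [← Finset.card_eq_iff_eq_univ, ← sum_cycleType, hx1, Fintype.card_fin]
  obtain ⟨a, ha, ha'⟩ := id hyc
  have htrans : IsPretransitive G (Fin n) := by
    rw [isPretransitive_iff_base a]
    intro u
    have hu : u ∈ x.support := by simp [hxs]
    have h1 : n ≤ 2 * (x.cycleOf u).support.card := by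
      apply hx2
      rw [cycleType_def]
      exact Multiset.mem_map_of_mem _ (cycleOf_mem_cycleFactorsFinset_iff.2 hu)
    have h2 : ¬ _root_.Disjoint (x.cycleOf u).support y.support := by
      intro h
      have h3 := Finset.card_union_of_disjoint h
      have h4 := Finset.card_le_univ ((x.cycleOf u).support ∪ y.support)
      rw [Fintype.card_fin] at h4
      omega
    obtain ⟨v, hv1, hv2⟩ := Finset.not_disjoint_iff.1 h2
    obtain ⟨k, hk⟩ := (mem_support_cycleOf_iff.1 hv1).1.symm
    obtain ⟨l, hl⟩ := ha' (mem_support.1 hv2)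
    refine ⟨⟨x ^ k * y ^ l, G.mul_mem (G.zpow_mem hx k) (G.zpow_mem hy l)⟩, ?_⟩
    change (x ^ k * y ^ l) a = u
    rw [Perm.mul_apply, hl, hk]
  have hcard : Nat.card (SubMulAction.ofFixingSubgroup G (y.support : Set (Fin n))ᶜ) = p := by
    rw [← hycard, ← Set.ncard_coe_finset]
    change Nat.card ((((y.support : Set (Fin n))ᶜ)ᶜ : Set (Fin n))) = _
    rw [compl_compl]; rfl
  have ht := isPretransitive_of_isCycle_mem hyc hy
  have hpr : IsPreprimitive (fixingSubgroup G (y.support : Set (Fin n))ᶜ)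
      (SubMulAction.ofFixingSubgroup G (y.support : Set (Fin n))ᶜ) :=
    IsPreprimitive.of_prime_card (hcard.symm ▸ hp)
  have hprim : IsPreprimitive G (Fin n) := by
    apply IsPreprimitive.of_card_lt
      (f := SubMulAction.ofFixingSubgroup_equivariantMap G (y.support : Set (Fin n))ᶜ)
    rw [← Set.image_univ, Set.ncard_image_of_injective _
      SubMulAction.ofFixingSubgroup_equivariantMap_injective, Set.ncard_univ, hcard, Nat.card_fin]
    exact hn
  have hm : IsMultiplyPreprimitive G (Fin n) (n - p - 1 + 2) := by
    apply hprim.isMultiplyPreprimitive (s := (y.support : Set (Fin n))ᶜ) _ _ hpr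
    · rw [← Finset.coe_compl, Set.ncard_coe_finset, Finset.card_compl, hycard, Fintype.card_fin]
      omega
    · have := hp.two_le
      rw [Nat.card_fin]; omega
  have hm' := hm.isMultiplyPretransitive
  refine aux_jordan hp hn hp3 G hprim y hy oy hyc ?_
  have := hp.two_le
  apply isMultiplyPretransitive_of_le (n := n - p - 1 + 2)
  · rw [Finset.card_compl, hycard, Fintype.card_fin]
    omega
  · rw [Nat.card_fin]; omega



/-- For `n > 7`, a prime `p` with `n/2 < p < n - 2`, an element `y` of order `p` in `A_n`,
and `x ∈ A_n` an `n`-cycle (for odd `n`) or a product of two disjoint `n/2`-cycles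
(for even `n`), the elements `x` and `y` generate `A_n` invariably. -/
theorem alternating_invariable_generation_ncycle_prime
    (n p : ℕ) (hn : 7 < n) (hp : p.Prime) (hp1 : n < 2 * p) (hp2 : p < n - 2)
    (x y : alternatingGroup (Fin n))
    (hy : orderOf y = p)
    (hxodd : Odd n → (x : Equiv.Perm (Fin n)).cycleType = {n})
    (hxeven : Even n → (x : Equiv.Perm (Fin n)).cycleType = {n / 2, n / 2}) :
    ∀ g h : alternatingGroup (Fin n),
      Subgroup.closure {g⁻¹ * x * g, h⁻¹ * y * h} = ⊤ := by
  intro g h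
  set S : Set (alternatingGroup (Fin n)) := {g⁻¹ * x * g, h⁻¹ * y * h} with hS
  let f := (alternatingGroup (Fin n)).subtype
  have hx' : Equiv.Perm.cycleType ((g⁻¹ * x * g : alternatingGroup (Fin n)) : Equiv.Perm (Fin n)) =
      (x : Equiv.Perm (Fin n)).cycleType := by
    have := Equiv.Perm.cycleType_conj (σ := (x : Equiv.Perm (Fin n)))
      (τ := ((g : Equiv.Perm (Fin n))⁻¹))
    simpa using this
  have hy' : orderOf ((h⁻¹ * y * h : alternatingGroup (Fin n)) : Equiv.Perm (Fin n)) = p := by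
    rw [Subgroup.orderOf_coe, ← hy]
    simpa using (MulAut.conj h⁻¹).orderOf_eq y
  have key : alternatingGroup (Fin n) ≤ (Subgroup.closure S).map f := by
    refine aux_main hp hp1 (by omega) _ _ _
      (Subgroup.mem_map_of_mem f (Subgroup.subset_closure (Set.mem_insert _ _)))
      (Subgroup.mem_map_of_mem f (Subgroup.subset_closure (Set.mem_insert_of_mem _ rfl)))
      hy' ?_ ?_
    · change (Equiv.Perm.cycleType ((g⁻¹ * x * g : alternatingGroup (Fin n)) :
        Equiv.Perm (Fin n))).sum = n
      rw [hx']
      rcases Nat.even_or_odd n with he | ho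
      · rw [hxeven he]
        obtain ⟨k, hk⟩ := he
        simp only [Multiset.insert_eq_cons, Multiset.sum_cons, Multiset.sum_singleton]
        omega
      · rw [hxodd ho]; simp
    · change ∀ c ∈ Equiv.Perm.cycleType ((g⁻¹ * x * g : alternatingGroup (Fin n)) :
        Equiv.Perm (Fin n)), n ≤ 2 * c
      rw [hx']
      intro c hc
      rcases Nat.even_or_odd n with he | ho
      · rw [hxeven he] at hc
        obtain ⟨k, hk⟩ := he
        simp at hc
        omega
      · rw [hxodd ho] at hc
        simp at hc
        omega
  rw [eq_top_iff]
  intro z _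
  obtain ⟨z', hz', hzz⟩ := key z.2
  have : z' = z := Subtype.ext hzz
  exact this ▸ hz'
end

section
/- Let x, y ∈ A_6 with x of cycle type {5} (a 5-cycle) and y of cycle type {4, 2}. Then for all g, h ∈ A_6, the subgroup of A_6 generated by g⁻¹xg and h⁻¹yh is all of A_6. -/
open Equiv Equiv.Perm MulAction
open scoped Pointwise

/-- The standard 5-cycle. -/
def fiveC : Perm (Fin 6) := c[0, 1, 2, 3, 4]

/-- The standard 5-cycle as a function. -/
def fiveF : Fin 6 → Fin 6 := ![1, 2, 3, 4, 0, 5]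

theorem fiveC_eq : ∀ i, fiveC i = fiveF i := by decide +kernel

/-- `w` moves exactly three points. -/
def movesThree (w : Fin 6 → Fin 6) : Bool :=
  decide ((Finset.univ.filter fun i => w i ≠ i).card = 3)

/-- Some word in `x` and `y` from a short list moves exactly three points. -/
def goodF (x y : Fin 6 → Fin 6) : Bool :=
  movesThree (fun i => x (y i)) ||
  movesThree (fun i => x (y (y i))) ||
  movesThree (fun i => x (y (y (y i)))) ||
  movesThree (fun i => x (y (x (x (y (y i)))))) ||
  movesThree (fun i => x (y (x (x (x (x (y i))))))) ||
  movesThree (fun i => x (y (y (x (x (y i)))))) ||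
  movesThree (fun i => x (y (y (x (x (y (y (y i)))))))) ||
  movesThree (fun i => x (y (y (y (x (x (y (y i)))))))) ||
  movesThree (fun i => x (y (x (x (y (y (y i))))))) ||
  movesThree (fun i => x (y (x (x (x (y (y (y i))))))))

set_option synthInstance.maxSize 10000 in
set_option synthInstance.maxHeartbeats 400000 in
theorem goodF_table : ∀ a : Fin 6, a ≠ 0 → ∀ b : Fin 6, b ≠ 1 → b ≠ a →
    ∀ c : Fin 6, c ≠ 2 → c ≠ a → c ≠ b →
    ∀ d : Fin 6, d ≠ 3 → d ≠ a → d ≠ b → d ≠ c →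
    ∀ e : Fin 6, e ≠ 4 → e ≠ a → e ≠ b → e ≠ c → e ≠ d →
    ∀ f : Fin 6, f ≠ 5 → f ≠ a → f ≠ b → f ≠ c → f ≠ d → f ≠ e →
    (∀ i, ![a, b, c, d, e, f] (![a, b, c, d, e, f] (![a, b, c, d, e, f] (![a, b, c, d, e, f] i))) = i) →
    (¬ ∀ i, ![a, b, c, d, e, f] (![a, b, c, d, e, f] i) = i) →
    goodF fiveF ![a, b, c, d, e, f] = true := by
  decide +kernel

theorem goodF_fiveC (y : Perm (Fin 6)) (hf : ∀ i, y i ≠ i) (h4 : ∀ i, y (y (y (y i))) = i)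
    (h2 : ¬ ∀ i, y (y i) = i) : goodF fiveC y = true := by
  have hx : (fiveC : Fin 6 → Fin 6) = fiveF := funext fiveC_eq
  have hy : (y : Fin 6 → Fin 6) = ![y 0, y 1, y 2, y 3, y 4, y 5] := by
    funext i; fin_cases i <;> rfl
  have inj : ∀ i j : Fin 6, i ≠ j → y i ≠ y j := fun i j h => y.injective.ne h
  have key := goodF_table (y 0) (hf 0) (y 1) (hf 1) (inj _ _ (by decide))
    (y 2) (hf 2) (inj _ _ (by decide)) (inj _ _ (by decide))
    (y 3) (hf 3) (inj _ _ (by decide)) (inj _ _ (by decide)) (inj _ _ (by decide))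
    (y 4) (hf 4) (inj _ _ (by decide)) (inj _ _ (by decide)) (inj _ _ (by decide))
    (inj _ _ (by decide))
    (y 5) (hf 5) (inj _ _ (by decide)) (inj _ _ (by decide)) (inj _ _ (by decide))
    (inj _ _ (by decide)) (inj _ _ (by decide))
  rw [← hy, ← hx] at key
  exact key h4 h2

theorem fiveC_cycleType : fiveC.cycleType = {5} := by
  decide +kernel

theorem goodF_mem {x y : Perm (Fin 6)} (G : Subgroup (Perm (Fin 6))) (hx : x ∈ G) (hy : y ∈ G)
    (h : goodF x y = true) : ∃ w ∈ G, w.IsThreeCycle := by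
  have aux : ∀ w : Perm (Fin 6), movesThree w = true → w ∈ G → ∃ w ∈ G, w.IsThreeCycle :=
    fun w h3 hw => ⟨w, hw, card_support_eq_three_iff.1 (of_decide_eq_true h3)⟩
  simp only [goodF, Bool.or_eq_true, or_assoc] at h
  rcases h with h | h | h | h | h | h | h | h | h | h
  · refine aux (x * y) h ?_
    repeat' first | exact hx | exact hy | apply G.mul_mem
  · refine aux (x * (y * y)) h ?_
    repeat' first | exact hx | exact hy | apply G.mul_mem
  · refine aux (x * (y * (y * y))) h ?_
    repeat' first | exact hx | exact hy | apply G.mul_mem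
  · refine aux (x * (y * (x * (x * (y * y))))) h ?_
    repeat' first | exact hx | exact hy | apply G.mul_mem
  · refine aux (x * (y * (x * (x * (x * (x * y)))))) h ?_
    repeat' first | exact hx | exact hy | apply G.mul_mem
  · refine aux (x * (y * (y * (x * (x * y))))) h ?_
    repeat' first | exact hx | exact hy | apply G.mul_mem
  · refine aux (x * (y * (y * (x * (x * (y * (y * y))))))) h ?_
    repeat' first | exact hx | exact hy | apply G.mul_mem
  · refine aux (x * (y * (y * (y * (x * (x * (y * y))))))) h ?_
    repeat' first | exact hx | exact hy | apply G.mul_mem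
  · refine aux (x * (y * (x * (x * (y * (y * y)))))) h ?_
    repeat' first | exact hx | exact hy | apply G.mul_mem
  · refine aux (x * (y * (x * (x * (x * (y * (y * y))))))) h ?_
    repeat' first | exact hx | exact hy | apply G.mul_mem

theorem fiveC_orbit : ∀ i j : Fin 6, i ≠ 5 → j ≠ 5 → ∃ k : Fin 5, (fiveC ^ (k : ℕ)) i = j := by
  decide +kernel

theorem prim_of_mem (G : Subgroup (Perm (Fin 6))) (hx : fiveC ∈ G) {y : Perm (Fin 6)}
    (hy : y ∈ G) (hy5 : y 5 ≠ 5) : IsPreprimitive G (Fin 6) := by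
  have orb : ∀ i j : Fin 6, i ≠ 5 → j ≠ 5 → ∃ g : G, g • i = j ∧ g • (5 : Fin 6) = 5 := by
    intro i j hi hj
    obtain ⟨k, hk⟩ := fiveC_orbit i j hi hj
    refine ⟨⟨fiveC ^ (k : ℕ), G.pow_mem hx _⟩, hk, ?_⟩
    have : ∀ k : Fin 5, (fiveC ^ (k : ℕ)) 5 = 5 := by decide +kernel
    exact this k
  have tr : IsPretransitive G (Fin 6) := by
    rw [isPretransitive_iff_base (5 : Fin 6)]
    intro j
    by_cases hj : j = 5
    · exact ⟨1, by simp [hj]⟩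
    · obtain ⟨g, hg, -⟩ := orb (y 5) j hy5 hj
      exact ⟨g * ⟨y, hy⟩, by rw [mul_smul]; exact hg⟩
  refine IsPreprimitive.of_isTrivialBlock_base (5 : Fin 6) fun {B} h5 hB => ?_
  by_cases hs : ∃ i ∈ B, i ≠ 5
  · right
    obtain ⟨i, hiB, hi⟩ := hs
    refine Set.eq_univ_of_forall fun j => ?_
    by_cases hj : j = 5
    · exact hj ▸ h5
    · obtain ⟨g, hg, hg5⟩ := orb i j hi hj
      have : g • B = B := hB.smul_eq_of_mem h5 (by rw [hg5]; exact h5)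
      rw [← this, ← hg]
      exact Set.smul_mem_smul_set hiB
  · left
    push Not at hs
    exact fun a ha b hb => (hs a ha).trans (hs b hb).symm

theorem alt_le_std {y : Perm (Fin 6)} (hy : y.cycleType = {4, 2}) (G : Subgroup (Perm (Fin 6)))
    (hxG : fiveC ∈ G) (hyG : y ∈ G) : alternatingGroup (Fin 6) ≤ G := by
  have ho : orderOf y = 4 := by rw [← lcm_cycleType, hy]; decide
  have hs : y.support = Finset.univ := by
    rw [← Finset.card_eq_iff_eq_univ, ← sum_cycleType, hy]; rfl
  have hf : ∀ i, y i ≠ i := fun i => mem_support.1 (hs ▸ Finset.mem_univ i)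
  have h4 : y ^ 4 = 1 := ho ▸ pow_orderOf_eq_one y
  have h2 : y ^ 2 ≠ 1 := fun h => by
    have := orderOf_dvd_of_pow_eq_one h
    rw [ho] at this
    revert this; decide
  obtain ⟨w, hw, h3⟩ := goodF_mem G hxG hyG (goodF_fiveC y hf
    (fun i => by simpa [pow_succ] using congrArg (fun p : Perm (Fin 6) => p i) h4)
    (fun h => h2 (Equiv.ext fun i => by simpa [pow_succ] using h i)))
  exact alternatingGroup_le_of_isPreprimitive_of_isThreeCycle_mem
    (prim_of_mem G hxG hyG (hf 5)) h3 hw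

theorem alt_le {x y : Perm (Fin 6)} (hx : x.cycleType = {5}) (hy : y.cycleType = {4, 2})
    (G : Subgroup (Perm (Fin 6))) (hxG : x ∈ G) (hyG : y ∈ G) :
    alternatingGroup (Fin 6) ≤ G := by
  obtain ⟨s, hs⟩ := isConj_iff.1 (isConj_iff_cycleType_eq.2 (hx.trans fiveC_cycleType.symm))
  have key := alt_le_std (y := s * y * s⁻¹) (by rw [cycleType_conj, hy])
    (G.map (MulAut.conj s).toMonoidHom) ⟨x, hxG, hs⟩ ⟨y, hyG, rfl⟩
  intro a ha
  have : s * a * s⁻¹ ∈ alternatingGroup (Fin 6) :=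
    (inferInstance : (alternatingGroup (Fin 6)).Normal).conj_mem a ha s
  obtain ⟨b, hb, hba⟩ := key this
  have : b = a := (MulAut.conj s).injective hba
  exact this ▸ hb

/-- `A_6` is generated invariably by a `5`-cycle and an element of cycle type `(4,2)`. -/
theorem alternating_six_invariable_generation
    (x y : alternatingGroup (Fin 6))
    (hx : (x : Equiv.Perm (Fin 6)).cycleType = {5})
    (hy : (y : Equiv.Perm (Fin 6)).cycleType = {4, 2}) :
    ∀ g h : alternatingGroup (Fin 6),
      Subgroup.closure {g⁻¹ * x * g, h⁻¹ * y * h} = ⊤ := by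
  intro g h
  have hc : ∀ g x : alternatingGroup (Fin 6),
      ((g⁻¹ * x * g : alternatingGroup (Fin 6)) : Perm (Fin 6)).cycleType
        = (x : Perm (Fin 6)).cycleType := by
    intro g x
    have := cycleType_conj (σ := (x : Perm (Fin 6))) (τ := (g : Perm (Fin 6))⁻¹)
    simpa using this
  set K := Subgroup.closure {g⁻¹ * x * g, h⁻¹ * y * h} with hK
  have key := alt_le ((hc g x).trans hx) ((hc h y).trans hy)
    (K.map (alternatingGroup (Fin 6)).subtype)
    ⟨g⁻¹ * x * g, Subgroup.subset_closure (by simp), rfl⟩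
    ⟨h⁻¹ * y * h, Subgroup.subset_closure (by simp), rfl⟩
  rw [eq_top_iff]
  intro a _
  obtain ⟨b, hb, hba⟩ := key a.2
  have : b = a := Subtype.ext hba
  exact this ▸ hb
end

section
/- Let x, y ∈ A_7 with x of cycle type {7} (a 7-cycle) and y of cycle type {5} (a 5-cycle). Then for all g, h ∈ A_7, the subgroup of A_7 generated by g⁻¹xg and h⁻¹yh is all of A_7. -/
open MulAction Equiv Equiv.Perm in
theorem three_trans_aux (K : Subgroup (Equiv.Perm (Fin 7))) (a b : Equiv.Perm (Fin 7))
    (ha : a ∈ K) (hb : b ∈ K) (hac : a.cycleType = {7}) (hbc : b.cycleType = {5}) :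
    IsMultiplyPretransitive K (Fin 7) 3 := by
  classical
  have hacyc : a.IsCycle := card_cycleType_eq_one.mp (by rw [hac]; rfl)
  have hbcyc : b.IsCycle := card_cycleType_eq_one.mp (by rw [hbc]; rfl)
  have hasup : a.support = Finset.univ := by
    rw [← Finset.card_eq_iff_eq_univ, ← sum_cycleType, hac]; rfl
  have hbsup : b.support.card = 5 := by rw [← sum_cycleType, hbc]; rfl
  have htr : IsPretransitive K (Fin 7) := by
    refine ⟨fun u v => ?_⟩
    have hu : a u ≠ u := by rw [← mem_support, hasup]; simp
    have hv : a v ≠ v := by rw [← mem_support, hasup]; simp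
    obtain ⟨i, hi⟩ := hacyc.sameCycle hu hv
    exact ⟨⟨a ^ i, K.zpow_mem ha i⟩, hi⟩
  have hprim : IsPreprimitive K (Fin 7) := IsPreprimitive.of_prime_card (by simp; norm_num)
  suffices IsMultiplyPreprimitive K (Fin 7) (1 + 2) from
    IsMultiplyPreprimitive.isMultiplyPretransitive ..
  apply hprim.isMultiplyPreprimitive (s := (b.supportᶜ : Set (Fin 7)))
  · apply Nat.add_left_cancel
    rw [Set.ncard_add_ncard_compl, Set.ncard_coe_finset, hbsup]
    simp
  · simp
  have := isPretransitive_of_isCycle_mem hbcyc hb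
  apply IsPreprimitive.of_prime_card
  convert! Nat.prime_five
  rw [Nat.card_eq_fintype_card, Fintype.card_subtype, ← hbsup]
  apply congr_arg
  ext x
  simp [SubMulAction.mem_ofFixingSubgroup_iff]

open MulAction Equiv Equiv.Perm in
theorem card_support_involution (t : Equiv.Perm (Fin 7)) (ht : orderOf t = 2)
    (hs : t ∈ alternatingGroup (Fin 7)) : t.support.card ≤ 4 := by
  obtain ⟨n, hn⟩ := cycleType_prime_order (by rw [ht]; norm_num : (orderOf t).Prime)
  rw [ht] at hn
  have h1 : t.support.card = (n + 1) * 2 := by rw [← sum_cycleType, hn]; simp; ring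
  have h2 : t.support.card ≤ 7 := by simpa using Finset.card_le_univ t.support
  rw [mem_alternatingGroup, sign_of_cycleType, hn] at hs
  have : n ≤ 2 := by omega
  interval_cases n
  · omega
  · omega
  · exfalso; revert hs; decide

open MulAction Equiv Equiv.Perm in
theorem card_ge_aux (K : Subgroup (Equiv.Perm (Fin 7))) (hK : K ≤ alternatingGroup (Fin 7))
    (h : IsMultiplyPretransitive K (Fin 7) 3) : 420 ≤ Nat.card K := by
  have key : ∀ s : Set (Fin 7), s.ncard = 3 →
      Nat.card K = 210 * Nat.card (fixingSubgroup K s) := by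
    intro s hs
    have h' : IsMultiplyPretransitive K (Fin 7) s.ncard := by rw [hs]; exact h
    have := h'.index_of_fixingSubgroup_mul rfl
    rw [hs] at this
    simp [Nat.factorial] at this
    rw [← (fixingSubgroup K s).index_mul_card]
    congr 1
    omega
  obtain ⟨s0, _, hs0⟩ := Set.exists_subset_card_eq (s := (Set.univ : Set (Fin 7))) (n := 3)
    (by simp [Set.ncard_univ])
  have : Fact (Nat.Prime 2) := ⟨Nat.prime_two⟩
  obtain ⟨t, ht⟩ := exists_prime_orderOf_dvd_card' (G := K) 2
    (by rw [key s0 hs0]; exact Dvd.dvd.mul_right (by norm_num) _)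
  have ht' : orderOf (t : Equiv.Perm (Fin 7)) = 2 := by rw [Subgroup.orderOf_coe, ht]
  have hsup := card_support_involution t ht' (hK t.2)
  have hc : 3 ≤ ((t : Equiv.Perm (Fin 7)).support : Set (Fin 7))ᶜ.ncard := by
    have := Set.ncard_add_ncard_compl ((t : Equiv.Perm (Fin 7)).support : Set (Fin 7))
    rw [Set.ncard_coe_finset] at this
    simp at this
    omega
  obtain ⟨s, hs, hs3⟩ := Set.exists_subset_card_eq hc
  have htm : t ∈ fixingSubgroup K s := by
    rw [mem_fixingSubgroup_iff]
    intro y hy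
    have := hs hy
    have h5 : (t : Equiv.Perm (Fin 7)) y = y := by simpa using this
    exact h5
  have : Nontrivial (fixingSubgroup K s) := by
    rw [Subgroup.nontrivial_iff_exists_ne_one]
    refine ⟨t, htm, ?_⟩
    rintro rfl
    simp at ht
  have : 1 < Nat.card (fixingSubgroup K s) := Finite.one_lt_card
  rw [key s hs3]
  omega

theorem eq_top_aux (H : Subgroup (alternatingGroup (Fin 7))) (h : 420 ≤ Nat.card H) :
    H = ⊤ := by
  have hA : Nat.card (alternatingGroup (Fin 7)) = 2520 := by
    rw [nat_card_alternatingGroup]; simp [Nat.factorial]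
  have hi : H.index ≤ 6 := by
    have := H.index_mul_card
    rw [hA] at this
    nlinarith
  have hsimp : IsSimpleGroup (alternatingGroup (Fin 7)) :=
    alternatingGroup.isSimpleGroup (by simp)
  rcases hsimp.eq_bot_or_eq_top_of_normal H.normalCore inferInstance with h0 | h0
  · exfalso
    rw [Subgroup.normalCore_eq_ker, MonoidHom.ker_eq_bot_iff] at h0
    have h1 := Nat.card_le_card_of_injective _ h0
    rw [hA, Nat.card_perm] at h1
    have h2 : (Nat.card (alternatingGroup (Fin 7) ⧸ H)).factorial ≤ Nat.factorial 6 :=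
      Nat.factorial_le hi
    have h3 : Nat.factorial 6 = 720 := rfl
    omega
  · exact top_le_iff.mp (h0 ▸ H.normalCore_le)

/-- `A_7` is generated invariably by a `7`-cycle and a `5`-cycle. -/
theorem alternating_seven_invariable_generation
    (x y : alternatingGroup (Fin 7))
    (hx : (x : Equiv.Perm (Fin 7)).cycleType = {7})
    (hy : (y : Equiv.Perm (Fin 7)).cycleType = {5}) :
    ∀ g h : alternatingGroup (Fin 7),
      Subgroup.closure {g⁻¹ * x * g, h⁻¹ * y * h} = ⊤ := by
  intro g h
  set H := Subgroup.closure {g⁻¹ * x * g, h⁻¹ * y * h} with hH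
  have hconj : ∀ u v : Equiv.Perm (Fin 7), (u⁻¹ * v * u).cycleType = v.cycleType := by
    intro u v
    simpa using Equiv.Perm.cycleType_conj (σ := v) (τ := u⁻¹)
  have h1 : g⁻¹ * x * g ∈ H := Subgroup.subset_closure (by simp)
  have h2 : h⁻¹ * y * h ∈ H := Subgroup.subset_closure (by simp)
  apply eq_top_aux
  have h3 := card_ge_aux (H.map (alternatingGroup (Fin 7)).subtype)
    (Subgroup.map_subtype_le H)
    (three_trans_aux _ _ _ (Subgroup.mem_map_of_mem _ h1) (Subgroup.mem_map_of_mem _ h2)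
      (by simpa [hconj] using hx) (by simpa [hconj] using hy))
  rwa [Subgroup.card_map_of_injective (Subgroup.subtype_injective _)] at h3
end

section
/- In the group G = SL(6, 𝔽₂) of 6 × 6 matrices of determinant 1 over the field 𝔽₂ = ZMod 2, there exist elements x of order 31 and y of order 7 such that for all g, h ∈ G, the subgroup of G generated by g⁻¹xg and h⁻¹yh is all of G. -/
namespace SL6

/-- Integer code of a rank-one product: column `k` of `a` times row `k` of `b`. -/
def rk (a b k : ℕ) : ℕ :=
  Nat.mul (Nat.land (Nat.shiftRight b k) 1090785345) (Nat.land (Nat.shiftRight a (Nat.mul 6 k)) 63)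

/-- Product of matrices coded as 36-bit integers (column by column). -/
def mulc (a b : ℕ) : ℕ :=
  Nat.xor (rk a b 0) (Nat.xor (rk a b 1) (Nat.xor (rk a b 2)
    (Nat.xor (rk a b 3) (Nat.xor (rk a b 4) (rk a b 5)))))

/-- `v` if bit `k` of `b` is set, `0` otherwise. -/
def bt (b k v : ℕ) : ℕ := Nat.mul (Nat.land (Nat.shiftRight b k) 1) v

/-- Bounded universal quantifier. -/
def allB : ℕ → (ℕ → Bool) → Bool
  | 0, _ => true
  | n+1, p => p n && allB n p

/-- The code of a transvection with centre the last basis vector. -/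
def istr (g : ℕ) : Bool := !(Nat.beq (Nat.land g 545392672) 0) && Nat.beq (Nat.land g 68174084063) 34630287489

def good3 (g : ℕ) : Bool := istr g || istr (mulc g g) || istr (mulc (mulc g g) (mulc g g))

def good2 (g g2 : ℕ) : Bool := good3 (mulc (mulc (mulc g g2) g2) g2)

def good1 (g g2 : ℕ) : Bool :=
  good2 (mulc (mulc g g2) g2) (mulc (mulc (mulc g g2) g2) (mulc (mulc g g2) g2))

/-- Some `g ^ 105`, `g ^ 210`, `g ^ 420` is a transvection with centre the last basis vector. -/
def good0 (g : ℕ) : Bool :=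
  good1 (mulc g (mulc g g)) (mulc (mulc g (mulc g g)) (mulc g (mulc g g)))

/-- Powers of `x`: the exponents, in the order in which they are tried. -/
def pc : ℕ → ℕ
  | 0 => 34630287489
  | n+1 => mulc (pc n) 34447851778

/-- Codes of the powers of `x`. -/
def xs : List ℕ := [34630287489, 34447851778, 34583126352, 34481742676, 34685712220, 34718400899, 34528887300, 34697925640, 34799436421, 34651821322, 34596525709, 34833200218, 34853675473, 34887549831, 34820970254, 34415163357, 34461267679, 34562651355, 34765562067, 34617000710, 34867074572, 34787095896, 34752291797, 34550421391, 34731816542, 34516547033, 34664178391, 34381272459, 34393629270, 34427376777, 34495012946]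

def anyL (t : ℕ) : List ℕ → Bool
  | [] => false
  | p :: l => good0 (mulc p t) || anyL t l

/-- Code of the involution with the given column data. -/
def tc (u a b c d : ℕ) : ℕ :=
  Nat.xor 34630287489 (Nat.xor 32 (Nat.xor (Nat.mul 2 u) (Nat.xor (Nat.mul 128 a) (Nat.xor (Nat.mul 8192 b)
    (Nat.xor (Nat.mul 524288 c) (Nat.mul 33554432 d))))))

def cmb2 (e a b : ℕ) : ℕ := Nat.xor (bt e 0 a) (bt e 1 b)

def cmb3 (e a b c : ℕ) : ℕ := Nat.xor (bt e 0 a) (Nat.xor (bt e 1 b) (bt e 2 c))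

def cmb4 (e a b c d : ℕ) : ℕ :=
  Nat.xor (bt e 0 a) (Nat.xor (bt e 1 b) (Nat.xor (bt e 2 c) (bt e 3 d)))

/-- The finite verification: for every relevant involution `t`, some power of `x ^ i * t`
is a transvection whose centre is the last basis vector. -/
def brute : Bool :=
  allB 16 fun a => allB 16 fun b =>
    if (Nat.ble 4 a || Nat.beq (cmb2 a a b) 0) && (Nat.ble 4 b || Nat.beq (cmb2 b a b) 0) then
      allB 16 fun c =>
        if (Nat.ble 8 a || Nat.beq (cmb3 a a b c) 0) && (Nat.ble 8 b || Nat.beq (cmb3 b a b c) 0)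
            && (Nat.ble 8 c || Nat.beq (cmb3 c a b c) 0) then
          allB 16 fun d =>
            if Nat.beq (cmb4 a a b c d) 0 && Nat.beq (cmb4 b a b c d) 0 &&
                Nat.beq (cmb4 c a b c d) 0 && Nat.beq (cmb4 d a b c d) 0 then
              allB 16 fun u =>
                if Nat.beq (cmb4 u a b c d) 0 then anyL (tc u a b c d) xs else true
            else true
        else true
    else true

set_option maxRecDepth 100000 in
theorem brute_true : brute = true := by decide +kernel

abbrev Mat := Matrix (Fin 6) (Fin 6) (ZMod 2)
abbrev Vec := Fin 6 → ZMod 2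
abbrev SL := Matrix.SpecialLinearGroup (Fin 6) (ZMod 2)

/-- Decoding of matrices. -/
def D (n : ℕ) : Mat := Matrix.of fun i j => if n.testBit (6 * j.val + i.val) then 1 else 0

theorem allB_spec {n : ℕ} {p : ℕ → Bool} (h : allB n p = true) : ∀ m < n, p m = true := by
  induction n with
  | zero => intro m hm; omega
  | succ n ih =>
    simp only [allB, Bool.and_eq_true] at h
    intro m hm
    rcases Nat.lt_succ_iff_lt_or_eq.mp hm with h1 | h1
    · exact ih h.2 m h1
    · exact h1 ▸ h.1

theorem D_xor (a b : ℕ) : D (Nat.xor a b) = D a + D b := by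
  ext i j
  have h : Nat.testBit (Nat.xor a b) (6 * j.val + i.val)
      = (Nat.testBit a (6 * j.val + i.val) ^^ Nat.testBit b (6 * j.val + i.val)) :=
    Nat.testBit_xor ..
  simp only [D, Matrix.of_apply, Matrix.add_apply, h]
  cases Nat.testBit a (6 * j.val + i.val) <;> cases Nat.testBit b (6 * j.val + i.val) <;> decide

def enc6 (b0 b1 b2 b3 b4 b5 : Bool) : ℕ :=
  b0.toNat * 2^0 ||| b1.toNat * 2^6 ||| b2.toNat * 2^12 ||| b3.toNat * 2^18 |||
    b4.toNat * 2^24 ||| b5.toNat * 2^30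

theorem enc6_mul : ∀ b0 b1 b2 b3 b4 b5 : Bool, ∀ c < 64, ∀ i < 6,
    (enc6 b0 b1 b2 b3 b4 b5 * c).testBit (6 * 0 + i) = (b0 && c.testBit i) ∧
    (enc6 b0 b1 b2 b3 b4 b5 * c).testBit (6 * 1 + i) = (b1 && c.testBit i) ∧
    (enc6 b0 b1 b2 b3 b4 b5 * c).testBit (6 * 2 + i) = (b2 && c.testBit i) ∧
    (enc6 b0 b1 b2 b3 b4 b5 * c).testBit (6 * 3 + i) = (b3 && c.testBit i) ∧
    (enc6 b0 b1 b2 b3 b4 b5 * c).testBit (6 * 4 + i) = (b4 && c.testBit i) ∧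
    (enc6 b0 b1 b2 b3 b4 b5 * c).testBit (6 * 5 + i) = (b5 && c.testBit i) := by
  decide +kernel

theorem mask_eq (n : ℕ) : n &&& 1090785345 = enc6 (n.testBit 0) (n.testBit 6) (n.testBit 12)
    (n.testBit 18) (n.testBit 24) (n.testBit 30) := by
  have h : 1090785345 = 2^0 ||| 2^6 ||| 2^12 ||| 2^18 ||| 2^24 ||| 2^30 := by decide +kernel
  rw [h]
  simp only [Nat.and_or_distrib_left, Nat.and_two_pow, enc6]

theorem rk_testBit (a b k i j : ℕ) (hi : i < 6) (hj : j < 6) :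
    (rk a b k).testBit (6 * j + i) = (a.testBit (6 * k + i) && b.testBit (6 * j + k)) := by
  have e : rk a b k = ((b >>> k) &&& 1090785345) * ((a >>> (6 * k)) &&& 63) := rfl
  have hc : ((a >>> (6 * k)) &&& 63) < 64 :=
    lt_of_le_of_lt Nat.and_le_right (by norm_num)
  have hci : ((a >>> (6 * k)) &&& 63).testBit i = a.testBit (6 * k + i) := by
    rw [Nat.testBit_and, Nat.testBit_shiftRight]
    have : Nat.testBit 63 i = true := by interval_cases i <;> decide
    rw [this, Bool.and_true]
  rw [e, mask_eq]
  have := enc6_mul ((b >>> k).testBit 0) ((b >>> k).testBit 6) ((b >>> k).testBit 12)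
    ((b >>> k).testBit 18) ((b >>> k).testBit 24) ((b >>> k).testBit 30) _ hc i hi
  rw [hci] at this
  obtain ⟨h0, h1, h2, h3, h4, h5⟩ := this
  simp only [Nat.testBit_shiftRight] at *
  rw [Bool.and_comm, Nat.add_comm (6 * j) k]
  interval_cases j
  · exact h0
  · exact h1
  · exact h2
  · exact h3
  · exact h4
  · exact h5

theorem D_rk (a b : ℕ) (k : Fin 6) (i j : Fin 6) :
    D (rk a b k.val) i j = D a i k * D b k j := by
  simp only [D, Matrix.of_apply, rk_testBit a b k.val i.val j.val i.2 j.2]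
  cases Nat.testBit a (6 * k.val + i.val) <;> cases Nat.testBit b (6 * j.val + k.val) <;> decide

theorem D_mulc (a b : ℕ) : D (mulc a b) = D a * D b := by
  ext i j
  rw [Matrix.mul_apply, Fin.sum_univ_six]
  simp only [mulc, D_xor, Matrix.add_apply]
  rw [← D_rk, ← D_rk, ← D_rk, ← D_rk, ← D_rk, ← D_rk]
  simp only [Fin.val_zero, Fin.val_one, Fin.val_two]
  change _ = D (rk a b 0) i j + D (rk a b 1) i j + D (rk a b 2) i j + D (rk a b 3) i j
    + D (rk a b 4) i j + D (rk a b 5) i j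
  ring

theorem D_one : D 34630287489 = 1 := by
  have h : ∀ i j : Fin 6, (if Nat.testBit 34630287489 (6 * j.val + i.val) then (1 : ZMod 2) else 0)
      = if i = j then 1 else 0 := by decide +kernel
  ext i j
  rw [Matrix.one_apply]
  exact h i j

theorem z2 : ∀ a : ZMod 2, a = 0 ∨ a = 1 := by decide

theorem z2' : ∀ a : ZMod 2, a ≠ 0 → a = 1 := by decide

theorem det_of_mul {A B : Mat} (h : A * B = 1) : A.det = 1 := by
  apply z2'
  intro h0
  have := congrArg Matrix.det h
  rw [Matrix.det_mul, h0, zero_mul, Matrix.det_one] at this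
  exact zero_ne_one this

/-- Code of `x`. -/
abbrev xc : ℕ := 34447851778
/-- Code of `y`. -/
abbrev yc : ℕ := 26310881538

theorem D_pc (n : ℕ) : D (pc n) = D xc ^ n := by
  induction n with
  | zero => rw [pow_zero]; exact D_one
  | succ n ih => rw [pow_succ, ← ih, ← D_mulc]; rfl

theorem xc_pow : D xc ^ 31 = 1 := by
  rw [← D_pc, ← D_one]
  exact congrArg D (by decide +kernel)

theorem yc_cube : D yc ^ 3 = D yc + 1 := by
  rw [← D_one, ← D_xor, pow_three, ← D_mulc, ← D_mulc]
  exact congrArg D (by decide +kernel)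

theorem two_mat (A : Mat) : A + A = 0 := CharTwo.add_self_eq_zero A

theorem pow7 {R : Type*} [Ring R] (A : R) (h2 : ∀ B : R, B + B = 0) (h : A ^ 3 = A + 1) : A ^ 7 = 1 := by
  have e : A ^ 7 = (A ^ 3) * (A ^ 3) * A := by rw [← pow_add, ← pow_succ]
  have e3 : (A + 1) * (A + 1) * A = A ^ 3 + (A ^ 2 + A ^ 2) + A := by noncomm_ring
  rw [e, h, e3, h2, h]
  rw [add_zero, add_right_comm, h2, zero_add]

/-- The element `x`. -/
def xg : SL := ⟨D xc, det_of_mul (B := D xc ^ 30) (by rw [← pow_succ']; exact xc_pow)⟩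

/-- The element `y`. -/
def yg : SL := ⟨D yc, det_of_mul (B := D yc ^ 6)
  (by rw [← pow_succ']; exact pow7 _ two_mat yc_cube)⟩

theorem xg_val : (xg : Mat) = D xc := rfl
theorem yg_val : (yg : Mat) = D yc := rfl

theorem xg_pow_val (n : ℕ) : ((xg ^ n : SL) : Mat) = D (pc n) := by
  rw [Matrix.SpecialLinearGroup.coe_pow, xg_val, D_pc]

theorem xg_order : orderOf xg = 31 := by
  have : Fact (Nat.Prime 31) := ⟨by norm_num⟩
  apply orderOf_eq_prime
  · apply Subtype.ext
    rw [Matrix.SpecialLinearGroup.coe_pow, xg_val, xc_pow]; rfl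
  · intro h
    have h1 : D xc 0 0 = 1 := by rw [← xg_val, h]; rfl
    revert h1
    decide +kernel

theorem yg_order : orderOf yg = 7 := by
  have : Fact (Nat.Prime 7) := ⟨by norm_num⟩
  apply orderOf_eq_prime
  · apply Subtype.ext
    rw [Matrix.SpecialLinearGroup.coe_pow, yg_val, pow7 _ two_mat yc_cube]; rfl
  · intro h
    have h1 : D yc 0 0 = 1 := by rw [← yg_val, h]; rfl
    revert h1
    decide +kernel

open Matrix

/-- Decoding of vectors. -/
def vd (n : ℕ) : Vec := fun i => D n i 0

/-- Decoding of row vectors. -/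
def rd (n : ℕ) : Vec := fun j => D n 0 j

theorem D_mulVec (a n : ℕ) : D a *ᵥ vd n = vd (mulc a n) := by
  ext i
  simp only [vd, D_mulc, Matrix.mul_apply, Matrix.mulVec, dotProduct]

theorem D_vecMul (a n : ℕ) : rd n ᵥ* D a = rd (mulc n a) := by
  ext i
  simp only [rd, D_mulc, Matrix.mul_apply, Matrix.vecMul, dotProduct]

/-- The vector fixed by `x`. -/
abbrev lv : Vec := ![0, 0, 0, 0, 0, 1]
abbrev ev0 : Vec := ![1, 0, 0, 0, 0, 0]

/-- Code of a vector. -/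
def vcode (a b c d e f : ZMod 2) : ℕ :=
  a.val + 2 * b.val + 4 * c.val + 8 * d.val + 16 * e.val + 32 * f.val

/-- Code of a row vector. -/
def rcode (a b c d e f : ZMod 2) : ℕ :=
  a.val + 64 * b.val + 4096 * c.val + 262144 * d.val + 16777216 * e.val + 1073741824 * f.val

theorem vec_eta (v : Vec) : v = ![v 0, v 1, v 2, v 3, v 4, v 5] := by
  ext i; fin_cases i <;> rfl

theorem vd_vcode (a b c d e f : ZMod 2) : vd (vcode a b c d e f) = ![a, b, c, d, e, f] := by
  have h : ∀ a b c d e f : ZMod 2, ∀ i : Fin 6,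
      (if (vcode a b c d e f).testBit (6 * 0 + i.val) then (1 : ZMod 2) else 0)
        = ![a, b, c, d, e, f] i := by decide +kernel
  ext i
  exact h a b c d e f i

theorem rd_rcode (a b c d e f : ZMod 2) : rd (rcode a b c d e f) = ![a, b, c, d, e, f] := by
  have h : ∀ a b c d e f : ZMod 2, ∀ i : Fin 6,
      (if (rcode a b c d e f).testBit (6 * i.val + 0) then (1 : ZMod 2) else 0)
        = ![a, b, c, d, e, f] i := by decide +kernel
  ext i
  exact h a b c d e f i

/-- `x` is transitive on the nonzero vectors of the invariant hyperplane. -/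
theorem orb0 (v : Vec) (h5 : v 5 = 0) (h : v ≠ 0) : ∃ i : ℕ, (xg ^ i : SL).1 *ᵥ ev0 = v := by
  have key : ∀ a b c d e : ZMod 2, (a = 0 ∧ b = 0 ∧ c = 0 ∧ d = 0 ∧ e = 0) ∨
      ∃ i < 31, mulc (pc i) (vcode 1 0 0 0 0 0) = vcode a b c d e 0 := by decide +kernel
  rcases key (v 0) (v 1) (v 2) (v 3) (v 4) with ⟨a, b, c, d, e⟩ | ⟨i, -, hi⟩
  · exfalso; apply h; rw [vec_eta v, a, b, c, d, e, h5]; decide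
  · refine ⟨i, ?_⟩
    rw [xg_pow_val, ev0, ← vd_vcode, D_mulVec, hi, vd_vcode, vec_eta v, h5]
    rfl

theorem orb1 (v : Vec) (h5 : v 5 = 1) (h : v ≠ lv) :
    ∃ i : ℕ, (xg ^ i : SL).1 *ᵥ (ev0 + lv) = v := by
  have key : ∀ a b c d e : ZMod 2, (a = 0 ∧ b = 0 ∧ c = 0 ∧ d = 0 ∧ e = 0) ∨
      ∃ i < 31, mulc (pc i) (vcode 1 0 0 0 0 1) = vcode a b c d e 1 := by decide +kernel
  rcases key (v 0) (v 1) (v 2) (v 3) (v 4) with ⟨a, b, c, d, e⟩ | ⟨i, -, hi⟩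
  · exfalso; apply h; rw [vec_eta v, a, b, c, d, e, h5]
  · refine ⟨i, ?_⟩
    have e1 : ev0 + lv = ![1, 0, 0, 0, 0, 1] := by decide
    rw [xg_pow_val, e1, ← vd_vcode, D_mulVec, hi, vd_vcode, vec_eta v, h5]
    rfl

theorem orbr (v : Vec) (h5 : v 5 = 0) (h : v ≠ 0) : ∃ i : ℕ, ev0 ᵥ* (xg ^ i : SL).1 = v := by
  have key : ∀ a b c d e : ZMod 2, (a = 0 ∧ b = 0 ∧ c = 0 ∧ d = 0 ∧ e = 0) ∨
      ∃ i < 31, mulc (rcode 1 0 0 0 0 0) (pc i) = rcode a b c d e 0 := by decide +kernel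
  rcases key (v 0) (v 1) (v 2) (v 3) (v 4) with ⟨a, b, c, d, e⟩ | ⟨i, -, hi⟩
  · exfalso; apply h; rw [vec_eta v, a, b, c, d, e, h5]; decide
  · refine ⟨i, ?_⟩
    rw [xg_pow_val, ev0, ← rd_rcode, D_vecMul, hi, rd_rcode, vec_eta v, h5]
    rfl

/- Elementary facts on the action. -/
theorem mul_val (g h : SL) : (g * h : SL).1 = g.1 * h.1 := rfl

theorem one_val : (1 : SL).1 = 1 := rfl

theorem inv_mul_val (h : SL) : (h⁻¹ : SL).1 * h.1 = 1 := by
  rw [← mul_val, inv_mul_cancel, one_val]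

theorem mul_inv_val (h : SL) : h.1 * (h⁻¹ : SL).1 = 1 := by
  rw [← mul_val, mul_inv_cancel, one_val]

theorem act_inv {h : SL} {v w : Vec} (e : h.1 *ᵥ v = w) : (h⁻¹ : SL).1 *ᵥ w = v := by
  rw [← e, Matrix.mulVec_mulVec, inv_mul_val, Matrix.one_mulVec]

theorem act_inv' {h : SL} {v w : Vec} (e : v ᵥ* h.1 = w) : w ᵥ* (h⁻¹ : SL).1 = v := by
  rw [← e, Matrix.vecMul_vecMul, mul_inv_val, Matrix.vecMul_one]

theorem act_mul (g h : SL) (v : Vec) : (g * h : SL).1 *ᵥ v = g.1 *ᵥ (h.1 *ᵥ v) := by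
  rw [mul_val, Matrix.mulVec_mulVec]

theorem act_inj {h : SL} {v w : Vec} (e : h.1 *ᵥ v = h.1 *ᵥ w) : v = w := by
  rw [← act_inv (h := h) (v := v) rfl, e, act_inv rfl]

theorem act_ne {h : SL} {v : Vec} (hv : v ≠ 0) : h.1 *ᵥ v ≠ 0 := fun e =>
  hv (act_inj (h := h) (by rw [e, Matrix.mulVec_zero]))

theorem xg_l : xg.1 *ᵥ lv = lv := by
  have h : mulc xc (vcode 0 0 0 0 0 1) = vcode 0 0 0 0 0 1 := by decide +kernel
  rw [lv, ← vd_vcode, show xg.1 = D xc from rfl, D_mulVec, h]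

theorem xg_f : lv ᵥ* xg.1 = lv := by
  have h : mulc (rcode 0 0 0 0 0 1) xc = rcode 0 0 0 0 0 1 := by decide +kernel
  rw [lv, ← rd_rcode, show xg.1 = D xc from rfl, D_vecMul, h]

theorem xp_l (i : ℕ) : (xg ^ i : SL).1 *ᵥ lv = lv := by
  induction i with
  | zero => rw [pow_zero]; exact Matrix.one_mulVec _
  | succ i ih => rw [pow_succ, act_mul, xg_l, ih]

theorem xp_f (i : ℕ) : lv ᵥ* (xg ^ i : SL).1 = lv := by
  induction i with
  | zero => rw [pow_zero]; exact Matrix.vecMul_one _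
  | succ i ih => rw [pow_succ, mul_val, ← Matrix.vecMul_vecMul, ih, xg_f]

theorem lv_ne : lv ≠ 0 := by decide
theorem ev0_ne : ev0 ≠ 0 := by decide

theorem lv_dot (v : Vec) : lv ⬝ᵥ v = v 5 := by
  simp [dotProduct, Fin.sum_univ_six]

theorem vec_add_self (v : Vec) : v + v = 0 := by
  ext i; exact CharTwo.add_self_eq_zero _

/-- Any two vectors `v, w` other than `0, l` with the same last coordinate
are in the same `x`-orbit. -/
theorem orb (v w : Vec) (h : v 5 = w 5) (hv : v ≠ 0) (hv' : v ≠ lv) (hw : w ≠ 0) (hw' : w ≠ lv) :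
    ∃ k : SL, k ∈ Subgroup.zpowers xg ∧ k.1 *ᵥ v = w ∧ k.1 *ᵥ lv = lv := by
  have main : ∃ u i j, (xg ^ i : SL).1 *ᵥ u = v ∧ (xg ^ j : SL).1 *ᵥ u = w := by
    rcases z2 (v 5) with h0 | h1
    · obtain ⟨i, hi⟩ := orb0 v h0 hv
      obtain ⟨j, hj⟩ := orb0 w (h ▸ h0) hw
      exact ⟨_, i, j, hi, hj⟩
    · obtain ⟨i, hi⟩ := orb1 v h1 hv'
      obtain ⟨j, hj⟩ := orb1 w (h ▸ h1) hw'
      exact ⟨_, i, j, hi, hj⟩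
  obtain ⟨u, i, j, hi, hj⟩ := main
  refine ⟨xg ^ j * (xg ^ i)⁻¹, ?_, ?_, ?_⟩
  · exact mul_mem (pow_mem (Subgroup.mem_zpowers _) _)
      (inv_mem (pow_mem (Subgroup.mem_zpowers _) _))
  · rw [act_mul, act_inv hi, hj]
  · rw [act_mul, act_inv (xp_l i), xp_l]

theorem orbr' (v w : Vec) (hv5 : v 5 = 0) (hw5 : w 5 = 0) (hv : v ≠ 0) (hw : w ≠ 0) :
    ∃ k : SL, k ∈ Subgroup.zpowers xg ∧ v ᵥ* k.1 = w ∧ k.1 *ᵥ lv = lv ∧ lv ᵥ* k.1 = lv := by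
  obtain ⟨i, hi⟩ := orbr v hv5 hv
  obtain ⟨j, hj⟩ := orbr w hw5 hw
  refine ⟨(xg ^ i)⁻¹ * xg ^ j, ?_, ?_, ?_, ?_⟩
  · exact mul_mem (inv_mem (pow_mem (Subgroup.mem_zpowers _) _))
      (pow_mem (Subgroup.mem_zpowers _) _)
  · rw [mul_val, ← Matrix.vecMul_vecMul, act_inv' hi, hj]
  · rw [act_mul, xp_l, act_inv (xp_l i)]
  · rw [mul_val, ← Matrix.vecMul_vecMul, act_inv' (xp_f i), xp_f]

/-! ### Transitivity -/

theorem y_fix {y : SL} (hy : y.1 ^ 3 = y.1 + 1) {v : Vec} (h : y.1 *ᵥ v = v) : v = 0 := by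
  have h3 : y.1 ^ 3 *ᵥ v = v := by
    rw [pow_three, ← Matrix.mulVec_mulVec, ← Matrix.mulVec_mulVec, h, h, h]
  rw [hy, Matrix.add_mulVec, h, Matrix.one_mulVec, vec_add_self] at h3
  exact h3.symm

theorem y_fix' {y : SL} (hy : y.1 ^ 3 = y.1 + 1) {v : Vec} (h : v ᵥ* y.1 = v) : v = 0 := by
  have h3 : v ᵥ* y.1 ^ 3 = v := by
    rw [pow_three, ← Matrix.vecMul_vecMul, ← Matrix.vecMul_vecMul, h, h, h]
  rw [hy, Matrix.vecMul_add, h, Matrix.vecMul_one, vec_add_self] at h3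
  exact h3.symm

theorem row_eq {A : Mat} (r s : Vec) (h : ∀ v, r ⬝ᵥ (A *ᵥ v) = s ⬝ᵥ v) : r ᵥ* A = s := by
  ext i
  have := h (Pi.single i 1)
  rw [Matrix.dotProduct_mulVec] at this
  simpa using this

theorem zp (H : Subgroup SL) (hx : xg ∈ H) {k : SL} (hk : k ∈ Subgroup.zpowers xg) : k ∈ H :=
  (Subgroup.zpowers_le.mpr hx) hk

theorem trans_l (H : Subgroup SL) (hx : xg ∈ H) (y : SL) (hyH : y ∈ H) (hy : y.1 ^ 3 = y.1 + 1) (v : Vec) (hv : v ≠ 0) :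
    ∃ h ∈ H, h.1 *ᵥ lv = v := by
  set O : Vec → Prop := fun v => ∃ h ∈ H, h.1 *ᵥ lv = v with hO
  have Ol : O lv := ⟨1, one_mem _, Matrix.one_mulVec _⟩
  have Oact : ∀ g ∈ H, ∀ w, O w → O (g.1 *ᵥ w) := by
    rintro g hg w ⟨h, hh, rfl⟩
    exact ⟨g * h, mul_mem hg hh, act_mul _ _ _⟩
  have O0 : ∀ w, O w → w ≠ 0 := by
    rintro w ⟨h, -, rfl⟩
    exact act_ne lv_ne
  have Oorb : ∀ w w', O w → w ≠ lv → w 5 = w' 5 → w' ≠ 0 → w' ≠ lv → O w' := by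
    intro w w' hw hwl h5 h0 hl
    obtain ⟨k, hk, e, -⟩ := orb w w' h5 (O0 w hw) hwl h0 hl
    rw [← e]
    exact Oact k (zp H hx hk) w hw
  have Oy : O (y.1 *ᵥ lv) := Oact y hyH _ Ol
  have yl : y.1 *ᵥ lv ≠ lv := fun e => lv_ne (y_fix hy e)
  have A : ∃ w, O w ∧ w 5 = 0 := by
    by_contra hA
    push Not at hA
    have h1 : ∀ w, O w → w 5 = 1 := fun w hw => z2' _ (hA w hw)
    have h2 : ∀ w : Vec, w 5 = 1 → O w := by
      intro w hw
      by_cases hwl : w = lv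
      · rw [hwl]; exact Ol
      · refine Oorb _ w Oy yl ((h1 _ Oy).trans hw.symm) ?_ hwl
        rintro rfl
        exact zero_ne_one hw
    have h3 : ∀ w : Vec, w 5 = 1 → (y.1 *ᵥ w) 5 = 1 := fun w hw => h1 _ (Oact y hyH _ (h2 w hw))
    apply lv_ne
    apply y_fix' hy
    apply row_eq
    intro w
    rw [lv_dot, lv_dot]
    rcases z2 (w 5) with h0 | h0
    · have e : (w + lv) 5 = 1 := by rw [Pi.add_apply, h0]; decide
      have e2 := h3 _ e
      rw [Matrix.mulVec_add, Pi.add_apply, h1 _ Oy] at e2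
      rw [h0]
      simpa using e2
    · rw [h3 w h0, h0]
  have B : ∃ w, O w ∧ w 5 = 1 ∧ w ≠ lv := by
    by_contra hB
    push Not at hB
    have h1 : ∀ w, O w → w ≠ lv → w 5 = 0 := by
      intro w hw hl
      rcases z2 (w 5) with h | h
      · exact h
      · exact absurd (hB w hw h) hl
    have h2 : ∀ w : Vec, w 5 = 0 → w ≠ 0 → O w := by
      intro w hw h0
      refine Oorb _ w Oy yl ((h1 _ Oy yl).trans hw.symm) h0 ?_
      rintro rfl
      exact one_ne_zero hw
    have h3 : ∀ w : Vec, w 5 = 0 → (y.1 *ᵥ w) 5 = 0 := by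
      intro w hw
      by_contra hc
      have w0 : w ≠ 0 := by
        rintro rfl
        rw [Matrix.mulVec_zero] at hc
        exact hc rfl
      have e1 : ∀ u : Vec, u 5 = 0 → u ≠ 0 → (y.1 *ᵥ u) 5 ≠ 0 → y.1 *ᵥ u = lv := by
        intro u hu hu0 hne
        by_contra hl
        exact hne (h1 _ (Oact y hyH _ (h2 u hu hu0)) hl)
      have ew := e1 w hw w0 hc
      obtain ⟨u, hu5, hu0, huw⟩ : ∃ u : Vec, u 5 = 0 ∧ u ≠ 0 ∧ u ≠ w := by
        by_cases h : w = ev0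
        · exact ⟨![0, 1, 0, 0, 0, 0], by decide, by decide, by rw [h]; decide⟩
        · exact ⟨ev0, by decide, by decide, fun e => h e.symm⟩
      by_cases hc' : (y.1 *ᵥ u) 5 = 0
      · have hs : u + w ≠ 0 := by
          intro e
          apply huw
          rw [← add_zero u, ← vec_add_self w, ← add_assoc, e, zero_add]
        have e2 := e1 (u + w) (by rw [Pi.add_apply, hu5, hw, add_zero]) hs (by
          rw [Matrix.mulVec_add, Pi.add_apply, hc', zero_add]; exact hc)
        rw [Matrix.mulVec_add, ew] at e2
        exact act_ne hu0 (add_eq_right.mp e2)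
      · exact huw (act_inj ((e1 u hu5 hu0 hc').trans ew.symm))
    have h4 : ∀ w : Vec, (y.1 *ᵥ w) 5 = 0 := by
      intro w
      rcases z2 (w 5) with h0 | h0
      · exact h3 w h0
      · have e : (w + lv) 5 = 0 := by rw [Pi.add_apply, h0]; decide
        have e2 := h3 _ e
        rw [Matrix.mulVec_add, Pi.add_apply, h1 _ Oy yl, add_zero] at e2
        exact e2
    have := h4 ((y⁻¹ : SL).1 *ᵥ lv)
    rw [Matrix.mulVec_mulVec, mul_inv_val, Matrix.one_mulVec] at this
    exact one_ne_zero this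
  obtain ⟨a, ha, ha5⟩ := A
  obtain ⟨b, hb, hb5, hbl⟩ := B
  by_cases hvl : v = lv
  · rw [hvl]; exact Ol
  rcases z2 (v 5) with h0 | h0
  · refine Oorb a v ha ?_ (ha5.trans h0.symm) hv hvl
    rintro rfl
    exact one_ne_zero ha5
  · exact Oorb b v hb hbl (hb5.trans h0.symm) hv hvl

/-! ### An involution -/

theorem exists_swap (H : Subgroup SL) (ht : ∀ v : Vec, v ≠ 0 → ∃ h ∈ H, h.1 *ᵥ lv = v) :
    ∃ h ∈ H, h.1 *ᵥ lv ≠ lv ∧ (h.1 *ᵥ lv) 5 = ((h⁻¹ : SL).1 *ᵥ lv) 5 := by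
  by_contra hc
  push Not at hc
  choose! s hsH hs using ht
  have key : ∀ v w : Vec, v ≠ 0 → w ≠ 0 → v ≠ w →
      (((s v)⁻¹ : SL).1 *ᵥ w) 5 + (((s w)⁻¹ : SL).1 *ᵥ v) 5 = 1 := by
    intro v w hv hw hvw
    have e1 : ((s v)⁻¹ * s w : SL).1 *ᵥ lv = ((s v)⁻¹ : SL).1 *ᵥ w := by rw [act_mul, hs w hw]
    have e2 : (((s v)⁻¹ * s w : SL)⁻¹ : SL).1 *ᵥ lv = ((s w)⁻¹ : SL).1 *ᵥ v := by
      rw [_root_.mul_inv_rev, inv_inv, act_mul, hs v hv]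
    have := hc ((s v)⁻¹ * s w) (mul_mem (inv_mem (hsH v hv)) (hsH w hw)) (by
      intro e
      rw [e1] at e
      apply hvw
      rw [← hs v hv, ← e, Matrix.mulVec_mulVec, mul_inv_val, Matrix.one_mulVec])
    rw [e1, e2] at this
    revert this
    generalize (((s v)⁻¹ : SL).1 *ᵥ w) 5 = p
    generalize (((s w)⁻¹ : SL).1 *ᵥ v) 5 = q
    revert p q
    decide
  set a : Vec := ![1, 0, 0, 0, 0, 0] with ha
  set b : Vec := ![0, 1, 0, 0, 0, 0] with hb
  set c : Vec := ![0, 0, 1, 0, 0, 0] with hc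
  set d : Vec := ![0, 0, 0, 1, 0, 0] with hd
  have k1 := key a c (by decide) (by decide) (by decide)
  have k2 := key a d (by decide) (by decide) (by decide)
  have k3 := key a (c + d) (by decide) (by decide) (by decide)
  have k4 := key b c (by decide) (by decide) (by decide)
  have k5 := key b d (by decide) (by decide) (by decide)
  have k6 := key b (c + d) (by decide) (by decide) (by decide)
  have k7 := key (a + b) c (by decide) (by decide) (by decide)
  have k8 := key (a + b) d (by decide) (by decide) (by decide)
  have k9 := key (a + b) (c + d) (by decide) (by decide) (by decide)
  simp only [Matrix.mulVec_add, Pi.add_apply] at k1 k2 k3 k4 k5 k6 k7 k8 k9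
  have h2 : (2 : ZMod 2) = 0 := by decide
  have : (1 : ZMod 2) = 0 := by
    grind
  exact one_ne_zero this

theorem exists_invol (H : Subgroup SL) (hx : xg ∈ H)
    (ht : ∀ v : Vec, v ≠ 0 → ∃ h ∈ H, h.1 *ᵥ lv = v) :
    ∃ t ∈ H, t ≠ 1 ∧ t * t = 1 := by
  obtain ⟨h, hH, hl, h5⟩ := exists_swap H ht
  have hl' : (h⁻¹ : SL).1 *ᵥ lv ≠ lv := by
    intro e
    apply hl
    have := act_inv e
    rwa [inv_inv] at this
  obtain ⟨k, hk, e1, e2⟩ := orb _ _ h5 (act_ne lv_ne) hl (act_ne lv_ne) hl'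
  have gH : h * k ∈ H := mul_mem hH (zp H hx hk)
  set g := h * k with hg
  set p := h.1 *ᵥ lv with hp
  have g1 : g.1 *ᵥ lv = p := by rw [hg, act_mul, e2]
  have g2 : g.1 *ᵥ p = lv := by
    rw [hg, act_mul, e1, Matrix.mulVec_mulVec, mul_inv_val, Matrix.one_mulVec]
  have gsq : (g * g).1 *ᵥ lv = lv := by rw [act_mul, g1, g2]
  have gev : ∀ m : ℕ, ((g * g) ^ m : SL).1 *ᵥ lv = lv := by
    intro m
    induction m with
    | zero => rw [pow_zero]; exact Matrix.one_mulVec _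
    | succ m ih => rw [pow_succ, act_mul, gsq, ih]
  have hpos : 0 < orderOf g := orderOf_pos g
  rcases Nat.even_or_odd' (orderOf g) with ⟨m, hm | hm⟩
  · refine ⟨g ^ m, pow_mem gH m, ?_, ?_⟩
    · intro e
      have := Nat.le_of_dvd (by omega) (orderOf_dvd_of_pow_eq_one e)
      omega
    · rw [← pow_add, ← two_mul, ← hm, pow_orderOf_eq_one]
  · exfalso
    have e := pow_orderOf_eq_one g
    rw [hm, pow_succ', pow_mul, pow_two] at e
    have e3 : (g * (g * g) ^ m).1 *ᵥ lv = p := by rw [act_mul, gev, g1]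
    rw [e, one_val, Matrix.one_mulVec] at e3
    exact hl e3.symm

theorem exists_invol' (H : Subgroup SL) (hx : xg ∈ H)
    (ht : ∀ v : Vec, v ≠ 0 → ∃ h ∈ H, h.1 *ᵥ lv = v) :
    ∃ t ∈ H, t * t = 1 ∧ ∃ v : Vec, t.1 *ᵥ v = v + lv := by
  obtain ⟨t, tH, t1, tt⟩ := exists_invol H hx ht
  have : ∃ v : Vec, t.1 *ᵥ v ≠ v := by
    by_contra hc
    push Not at hc
    apply t1
    apply Subtype.ext
    apply Matrix.toLin'.injective
    ext1 i
    ext1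
    simp [hc]
  obtain ⟨v, hv⟩ := this
  have hn : v + t.1 *ᵥ v ≠ 0 := by
    intro e
    apply hv
    rw [← zero_add (t.1 *ᵥ v), ← vec_add_self v, add_assoc, e, add_zero]
  obtain ⟨h, hH, e⟩ := ht _ hn
  refine ⟨h⁻¹ * t * h, mul_mem (mul_mem (inv_mem hH) tH) hH, ?_, (h⁻¹ : SL).1 *ᵥ v, ?_⟩
  · have : h⁻¹ * t * h * (h⁻¹ * t * h) = h⁻¹ * (t * t) * h := by group
    rw [this, tt]; group
  · rw [act_mul, act_mul]
    rw [show h.1 *ᵥ (h⁻¹ : SL).1 *ᵥ v = v by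
      rw [Matrix.mulVec_mulVec, mul_inv_val, Matrix.one_mulVec]]
    rw [← act_inv e, ← Matrix.mulVec_add, ← add_assoc, vec_add_self, zero_add]

/-! ### From a transvection to everything -/

theorem all_of_transvection (H : Subgroup SL) (hx : xg ∈ H)
    (ht : ∀ v : Vec, v ≠ 0 → ∃ h ∈ H, h.1 *ᵥ lv = v) (k : SL) (hk : k ∈ H) (r : Vec)
    (hr : r ≠ 0) (hr5 : r 5 = 0) (hkr : k.1 = 1 + Matrix.vecMulVec lv r) : H = ⊤ := by
  have elem : ∀ i j : Fin 6, i ≠ j → ∃ h ∈ H, h.1 = Matrix.transvection i j (1 : ZMod 2) := by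
    intro i j hij
    obtain ⟨h, hH, e⟩ := ht (Pi.single i 1) (by simp)
    have s5 : ((Pi.single j 1 : Vec) ᵥ* h.1) 5 = 0 := by
      have e1 : ((Pi.single j 1 : Vec) ᵥ* h.1) ⬝ᵥ lv = 0 := by
        rw [← Matrix.dotProduct_mulVec, e]
        simp [hij]
      rwa [dotProduct_comm, lv_dot] at e1
    have s0 : ((Pi.single j 1 : Vec) ᵥ* h.1) ≠ 0 := by
      intro e0
      have := act_inv' e0
      rw [Matrix.zero_vecMul] at this
      have := congrFun this j
      simp at this
    obtain ⟨s, hs, e1, e2, -⟩ := orbr' r _ hr5 s5 hr s0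
    have sH := zp H hx hs
    refine ⟨h * s⁻¹ * k * s * h⁻¹, mul_mem (mul_mem (mul_mem (mul_mem hH (inv_mem sH)) hk) sH)
      (inv_mem hH), ?_⟩
    simp only [mul_val, hkr]
    rw [Matrix.mul_add, Matrix.add_mul, Matrix.add_mul, Matrix.mul_one, Matrix.mul_assoc h.1,
      inv_mul_val, Matrix.mul_one, mul_inv_val, Matrix.mul_vecMulVec, Matrix.vecMulVec_mul,
      Matrix.vecMulVec_mul, ← Matrix.mulVec_mulVec, act_inv e2, e, e1, act_inv' rfl,
      Matrix.transvection, Matrix.single_eq_single_vecMulVec_single]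
  rw [eq_top_iff]
  intro M _
  have := Matrix.diagonal_transvection_induction (fun A : Mat => ∃ h ∈ H, h.1 = A) M.1 ?_ ?_ ?_
  · obtain ⟨h, hH, e⟩ := this
    rwa [← Subtype.ext e]
  · intro d hd
    refine ⟨1, one_mem _, ?_⟩
    rw [one_val, ← Matrix.diagonal_one]
    congr 1
    ext i
    rw [M.2, Matrix.det_diagonal] at hd
    refine (z2' _ ?_).symm
    intro h0
    rw [Finset.prod_eq_zero (Finset.mem_univ i) h0] at hd
    exact zero_ne_one hd
  · rintro ⟨i, j, hij, c⟩
    rcases z2 c with rfl | rfl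
    · exact ⟨1, one_mem _, by simp [Matrix.TransvectionStruct.toMatrix]⟩
    · exact elem i j hij
  · rintro A B ⟨a, ha, rfl⟩ ⟨b, hb, rfl⟩
    exact ⟨a * b, mul_mem ha hb, rfl⟩

/-! ### Using the finite verification -/

/-- The code `n` represents an element of `H`. -/
def InH (H : Subgroup SL) (n : ℕ) : Prop := ∃ h ∈ H, h.1 = D n

theorem InH.mulc {H : Subgroup SL} {a b : ℕ} (ha : InH H a) (hb : InH H b) : InH H (mulc a b) := by
  obtain ⟨g, hg, e⟩ := ha
  obtain ⟨h, hh, e'⟩ := hb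
  exact ⟨g * h, mul_mem hg hh, by rw [mul_val, e, e', D_mulc]⟩

theorem good3_spec {H : Subgroup SL} {g : ℕ} (hg : InH H g) (h : good3 g = true) :
    ∃ n, InH H n ∧ istr n = true := by
  simp only [good3, Bool.or_eq_true] at h
  rcases h with (h | h) | h
  · exact ⟨_, hg, h⟩
  · exact ⟨_, hg.mulc hg, h⟩
  · exact ⟨_, (hg.mulc hg).mulc (hg.mulc hg), h⟩

theorem good0_spec {H : Subgroup SL} {g : ℕ} (hg : InH H g) (h : good0 g = true) :
    ∃ n, InH H n ∧ istr n = true := by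
  have h3 := hg.mulc (hg.mulc hg)
  have h6 := h3.mulc h3
  have h15 := (h3.mulc h6).mulc h6
  have h30 := h15.mulc h15
  exact good3_spec (((h15.mulc h30).mulc h30).mulc h30) h

theorem anyL_spec {H : Subgroup SL} {t : ℕ} (ht : InH H t) (L : List ℕ) (hL : ∀ p ∈ L, InH H p)
    (h : anyL t L = true) : ∃ n, InH H n ∧ istr n = true := by
  induction L with
  | nil => simp [anyL] at h
  | cons p L ih =>
    simp only [anyL, Bool.or_eq_true] at h
    rcases h with h | h
    · exact good0_spec ((hL p List.mem_cons_self).mulc ht) h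
    · exact ih (fun q hq => hL q (List.mem_cons_of_mem _ hq)) h

theorem xs_InH (H : Subgroup SL) (hx : xg ∈ H) : ∀ p ∈ xs, InH H p := by
  have key : ∀ p ∈ xs, ∃ i < 31, pc i = p := by decide +kernel
  intro p hp
  obtain ⟨i, -, rfl⟩ := key p hp
  exact ⟨xg ^ i, pow_mem hx i, xg_pow_val i⟩

theorem istr_spec {n : ℕ} (h : istr n = true) :
    ∃ r : Vec, r ≠ 0 ∧ r 5 = 0 ∧ D n = 1 + Matrix.vecMulVec lv r := by
  simp only [istr, Bool.and_eq_true, Bool.not_eq_true', Nat.beq_eq] at h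
  obtain ⟨h0, h2⟩ := h
  have h1 : Nat.land n 545392672 ≠ 0 := fun e => by
    rw [e] at h0
    exact absurd h0 (by decide)
  have hmask : ∀ i j : Fin 6, (i ≠ 5 ∨ j = 5) → Nat.testBit 68174084063 (6 * j.val + i.val) = true := by
    decide +kernel
  have hD : ∀ i j : Fin 6, (i ≠ 5 ∨ j = 5) → D n i j = (1 : Mat) i j := by
    intro i j hij
    have e := congrArg (fun m => Nat.testBit m (6 * j.val + i.val)) h2
    have e' : (Nat.testBit n (6 * j.val + i.val) && Nat.testBit 68174084063 (6 * j.val + i.val))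
        = Nat.testBit 34630287489 (6 * j.val + i.val) := (Nat.testBit_and ..).symm.trans e
    rw [hmask i j hij, Bool.and_true] at e'
    rw [← D_one]
    simp only [D, Matrix.of_apply, e']
  have hne : ∃ j : Fin 6, j ≠ 5 ∧ D n 5 j = 1 := by
    obtain ⟨idx, hi⟩ := Nat.exists_testBit_of_ne_zero h1
    have hi' : (Nat.testBit n idx && Nat.testBit 545392672 idx) = true :=
      (Nat.testBit_and ..).symm.trans hi
    rw [Bool.and_eq_true] at hi'
    have hlt : idx < 36 := by
      by_contra hc
      have : Nat.testBit 545392672 idx = false := Nat.testBit_lt_two_pow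
        (lt_of_lt_of_le (by norm_num : 545392672 < 2 ^ 36) (Nat.pow_le_pow_right (by norm_num) (by omega)))
      rw [this] at hi'
      exact Bool.false_ne_true hi'.2
    have key : ∀ idx < 36, Nat.testBit 545392672 idx = true →
        ∃ j : Fin 6, j ≠ 5 ∧ idx = 6 * j.val + 5 := by decide +kernel
    obtain ⟨j, hj, rfl⟩ := key idx hlt hi'.2
    refine ⟨j, hj, ?_⟩
    have := hi'.1
    simp only [D, Matrix.of_apply]
    exact if_pos this
  refine ⟨fun j => if j = 5 then 0 else D n 5 j, ?_, by simp, ?_⟩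
  · obtain ⟨j, hj, e⟩ := hne
    intro h0
    have := congrFun h0 j
    simp only [if_neg hj, e] at this
    exact one_ne_zero this
  · ext i j
    rw [Matrix.add_apply, Matrix.vecMulVec_apply]
    by_cases hi : i = 5
    · subst hi
      by_cases hj : j = 5
      · subst hj
        rw [hD 5 5 (Or.inr rfl)]
        simp
      · rw [if_neg hj, Matrix.one_apply_ne (fun e => hj e.symm), zero_add]
        exact (one_mul _).symm
    · rw [hD i j (Or.inl hi)]
      have : lv i = 0 := by
        revert i; decide
      rw [this, zero_mul, add_zero]

/-- Code of four bits. -/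
def e4 (p q r s : ZMod 2) : ℕ := p.val + 2 * q.val + 4 * r.val + 8 * s.val

theorem e4_lt : ∀ p q r s, e4 p q r s < 16 := by decide +kernel

theorem e4_xor : ∀ p q r s p' q' r' s',
    Nat.xor (e4 p q r s) (e4 p' q' r' s') = e4 (p + p') (q + q') (r + r') (s + s') := by
  decide +kernel

theorem e4_bt0 : ∀ a b c d p q r s,
    bt (e4 a b c d) 0 (e4 p q r s) = e4 (a * p) (a * q) (a * r) (a * s) := by decide +kernel
theorem e4_bt1 : ∀ a b c d p q r s,
    bt (e4 a b c d) 1 (e4 p q r s) = e4 (b * p) (b * q) (b * r) (b * s) := by decide +kernel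
theorem e4_bt2 : ∀ a b c d p q r s,
    bt (e4 a b c d) 2 (e4 p q r s) = e4 (c * p) (c * q) (c * r) (c * s) := by decide +kernel
theorem e4_bt3 : ∀ a b c d p q r s,
    bt (e4 a b c d) 3 (e4 p q r s) = e4 (d * p) (d * q) (d * r) (d * s) := by decide +kernel

theorem bt2_zero : ∀ e < 4, ∀ v < 16, bt e 2 v = 0 := by decide +kernel
theorem bt3_zero : ∀ e < 8, ∀ v < 16, bt e 3 v = 0 := by decide +kernel

theorem nxor_zero (a : ℕ) : Nat.xor a 0 = a := Nat.xor_zero a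

theorem cmb3_of {e a b c d : ℕ} (he : e < 8) (hd : d < 16) (h : cmb4 e a b c d = 0) :
    cmb3 e a b c = 0 := by
  rw [cmb4, bt3_zero e he d hd, nxor_zero] at h
  exact h

theorem cmb2_of {e a b c d : ℕ} (he : e < 4) (hc : c < 16) (hd : d < 16)
    (h : cmb4 e a b c d = 0) : cmb2 e a b = 0 := by
  rw [cmb4, bt3_zero e (by omega) d hd, bt2_zero e he c hc, nxor_zero, nxor_zero] at h
  exact h

theorem brute_spec {a b c d u : ℕ} (ha : a < 16) (hb : b < 16) (hc : c < 16) (hd : d < 16)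
    (hu : u < 16) (fa : cmb4 a a b c d = 0) (fb : cmb4 b a b c d = 0) (fc : cmb4 c a b c d = 0)
    (fd : cmb4 d a b c d = 0) (fu : cmb4 u a b c d = 0) : anyL (tc u a b c d) xs = true := by
  have h2 : ∀ e, cmb4 e a b c d = 0 → (Nat.ble 4 e || Nat.beq (cmb2 e a b) 0) = true := by
    intro e he
    rw [Bool.or_eq_true, Nat.ble_eq, Nat.beq_eq]
    rcases Nat.lt_or_ge e 4 with h | h
    · exact Or.inr (cmb2_of h hc hd he)
    · exact Or.inl h
  have h3 : ∀ e, cmb4 e a b c d = 0 → (Nat.ble 8 e || Nat.beq (cmb3 e a b c) 0) = true := by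
    intro e he
    rw [Bool.or_eq_true, Nat.ble_eq, Nat.beq_eq]
    rcases Nat.lt_or_ge e 8 with h | h
    · exact Or.inr (cmb3_of h hd he)
    · exact Or.inl h
  have h := allB_spec (allB_spec brute_true a ha) b hb
  rw [if_pos (by rw [h2 a fa, h2 b fb]; rfl)] at h
  have h := allB_spec h c hc
  rw [if_pos (by rw [h3 a fa, h3 b fb, h3 c fc]; rfl)] at h
  have h := allB_spec h d hd
  rw [if_pos (by rw [fa, fb, fc, fd]; rfl)] at h
  have h := allB_spec h u hu
  rw [if_pos (by rw [fu]; rfl)] at h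
  exact h

/-- The matrix with a single nonzero column `k`. -/
def colM (k : Fin 6) (p q r s : ZMod 2) : Mat :=
  Matrix.of fun i j => if j = k then ![0, p, q, r, s, 0] i else 0

theorem D_col (m : ℕ) (k : Fin 6) (h : ∀ p q r s : ZMod 2, ∀ i j : Fin 6,
    (if Nat.testBit (Nat.mul m (e4 p q r s)) (6 * j.val + i.val) then (1 : ZMod 2) else 0)
      = if j = k then ![0, p, q, r, s, 0] i else 0) (p q r s : ZMod 2) :
    D (Nat.mul m (e4 p q r s)) = colM k p q r s := by
  ext i j
  exact h p q r s i j

theorem D_tc (N : Mat) (h5 : ∀ j, N 5 j = if j = 0 then 1 else 0) (h0 : ∀ j, N 0 j = 0)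
    (hc : ∀ i, N i 5 = 0) :
    D (tc (e4 (N 1 0) (N 2 0) (N 3 0) (N 4 0)) (e4 (N 1 1) (N 2 1) (N 3 1) (N 4 1))
      (e4 (N 1 2) (N 2 2) (N 3 2) (N 4 2)) (e4 (N 1 3) (N 2 3) (N 3 3) (N 4 3))
      (e4 (N 1 4) (N 2 4) (N 3 4) (N 4 4))) = 1 + N := by
  have h32 : D 32 = Matrix.of fun i j : Fin 6 => if i = 5 ∧ j = 0 then (1 : ZMod 2) else 0 := by
    have : ∀ i j : Fin 6, (if Nat.testBit 32 (6 * j.val + i.val) then (1 : ZMod 2) else 0)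
      = if i = 5 ∧ j = 0 then 1 else 0 := by decide +kernel
    ext i j
    exact this i j
  simp only [tc, D_xor, D_one]
  rw [D_col 2 0 (by decide +kernel), D_col 128 1 (by decide +kernel),
    D_col 8192 2 (by decide +kernel), D_col 524288 3 (by decide +kernel),
    D_col 33554432 4 (by decide +kernel), h32]
  congr 1
  ext i j
  fin_cases i <;> fin_cases j <;> simp [colM, h5, h0, hc]

theorem exists_tr (H : Subgroup SL) (hx : xg ∈ H) (t : SL) (tH : t ∈ H) (N : Mat)
    (hN : t.1 = 1 + N) (hNN : N * N = 0) (h5 : ∀ j, N 5 j = if j = 0 then 1 else 0)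
    (h0 : ∀ j, N 0 j = 0) (hc : ∀ i, N i 5 = 0) : ∃ n, InH H n ∧ istr n = true := by
  have ht : InH H (tc (e4 (N 1 0) (N 2 0) (N 3 0) (N 4 0)) (e4 (N 1 1) (N 2 1) (N 3 1) (N 4 1))
      (e4 (N 1 2) (N 2 2) (N 3 2) (N 4 2)) (e4 (N 1 3) (N 2 3) (N 3 3) (N 4 3))
      (e4 (N 1 4) (N 2 4) (N 3 4) (N 4 4))) := ⟨t, tH, by rw [D_tc N h5 h0 hc, hN]⟩
  refine anyL_spec ht xs (xs_InH H hx) ?_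
  have hs : ∀ i j, N i 1 * N 1 j + (N i 2 * N 2 j + (N i 3 * N 3 j + N i 4 * N 4 j)) = 0 := by
    intro i j
    have := congrFun (congrFun hNN i) j
    rw [Matrix.mul_apply, Fin.sum_univ_six, h0, hc] at this
    rw [Matrix.zero_apply] at this
    linear_combination this
  have hs' : ∀ i j, N 1 j * N i 1 + (N 2 j * N i 2 + (N 3 j * N i 3 + N 4 j * N i 4)) = 0 := by
    intro i j
    linear_combination hs i j
  have z : e4 0 0 0 0 = 0 := by decide
  apply brute_spec
  any_goals exact e4_lt _ _ _ _
  all_goals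
    rw [cmb4, e4_bt0, e4_bt1, e4_bt2, e4_bt3, e4_xor, e4_xor, e4_xor, hs', hs', hs', hs', z]

theorem core (H : Subgroup SL) (hx : xg ∈ H) (y : SL) (hyH : y ∈ H)
    (hy : y.1 ^ 3 = y.1 + 1) : H = ⊤ := by
  have ht := trans_l H hx y hyH hy
  obtain ⟨t, tH, tt, v, hv⟩ := exists_invol' H hx ht
  have tv : t.1 * t.1 = 1 := by rw [← mul_val, tt, one_val]
  -- the nilpotent part
  have hNN : (1 + t.1) * (1 + t.1) = 0 := by
    have : (1 + t.1) * (1 + t.1) = (1 + t.1 * t.1) + (t.1 + t.1) := by noncomm_ring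
    rw [this, tv, two_mat, two_mat, add_zero]
  have hNv : (1 + t.1) *ᵥ v = lv := by
    rw [Matrix.add_mulVec, Matrix.one_mulVec, hv, ← add_assoc, vec_add_self, zero_add]
  have hNl : (1 + t.1) *ᵥ lv = 0 := by
    rw [← hNv, Matrix.mulVec_mulVec, hNN, Matrix.zero_mulVec]
  have r5 : (lv ᵥ* (1 + t.1)) 5 = 0 := by
    have : (lv ᵥ* (1 + t.1)) ⬝ᵥ lv = 0 := by
      rw [← Matrix.dotProduct_mulVec, hNl, dotProduct_zero]
    rwa [dotProduct_comm, lv_dot] at this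
  have r0 : lv ᵥ* (1 + t.1) ≠ 0 := by
    intro e
    have : (lv ᵥ* (1 + t.1)) ⬝ᵥ v = 1 := by
      rw [← Matrix.dotProduct_mulVec, hNv, lv_dot]; rfl
    rw [e, zero_dotProduct] at this
    exact zero_ne_one this
  obtain ⟨k, hk, k1, k2, k3⟩ := orbr' _ ev0 r5 rfl r0 ev0_ne
  have kH := zp H hx hk
  set N : Mat := (k⁻¹ : SL).1 * (1 + t.1) * k.1 with hN
  have N2 : N * N = 0 := by
    have : N * N = (k⁻¹ : SL).1 * (1 + t.1) * (k.1 * (k⁻¹ : SL).1) * (1 + t.1) * k.1 := by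
      rw [hN]; noncomm_ring
    rw [this, mul_inv_val, Matrix.mul_one, Matrix.mul_assoc (k⁻¹ : SL).1, hNN, Matrix.mul_zero,
      Matrix.zero_mul]
  have row5 : lv ᵥ* N = ev0 := by
    rw [hN, ← Matrix.vecMul_vecMul, ← Matrix.vecMul_vecMul, act_inv' k3, k1]
  have row0 : ev0 ᵥ* N = 0 := by
    rw [← row5, Matrix.vecMul_vecMul, N2, Matrix.vecMul_zero]
  have col5 : N *ᵥ lv = 0 := by
    rw [hN, ← Matrix.mulVec_mulVec, ← Matrix.mulVec_mulVec, k2, hNl, Matrix.mulVec_zero]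
  have h5 : ∀ j, N 5 j = if j = 0 then 1 else 0 := by
    intro j
    have e1 := congrFun row5 j
    have e2 : (lv ᵥ* N) j = N 5 j := by simp [Matrix.vecMul, dotProduct, Fin.sum_univ_six]
    have key : ∀ j : Fin 6, ev0 j = if j = 0 then 1 else 0 := by decide
    rw [← e2, e1]
    exact key j
  have h0 : ∀ j, N 0 j = 0 := by
    intro j
    have e1 := congrFun row0 j
    have e2 : (ev0 ᵥ* N) j = N 0 j := by simp [Matrix.vecMul, dotProduct, Fin.sum_univ_six]
    rw [← e2, e1]; rfl
  have hc : ∀ i, N i 5 = 0 := by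
    intro i
    have e1 := congrFun col5 i
    have e2 : (N *ᵥ lv) i = N i 5 := by simp [Matrix.mulVec, dotProduct, Fin.sum_univ_six]
    rw [← e2, e1]; rfl
  have hT : (k⁻¹ * t * k : SL).1 = 1 + N := by
    have : N = (k⁻¹ : SL).1 * k.1 + (k⁻¹ : SL).1 * t.1 * k.1 := by rw [hN]; noncomm_ring
    rw [this, inv_mul_val, ← add_assoc, two_mat, zero_add, mul_val, mul_val]
  obtain ⟨n, ⟨g, gH, e⟩, hn⟩ := exists_tr H hx _ (mul_mem (mul_mem (inv_mem kH) tH) kH) N hT N2 h5 h0 hc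
  obtain ⟨r, hr, hr5, hD⟩ := istr_spec hn
  exact all_of_transvection H hx ht g gH r hr hr5 (e.trans hD)

theorem final (g h : SL) : Subgroup.closure {g⁻¹ * xg * g, h⁻¹ * yg * h} = ⊤ := by
  set K := Subgroup.closure {g⁻¹ * xg * g, h⁻¹ * yg * h} with hK
  have hmem : ∀ z : SL, z ∈ K.comap (MulAut.conj g⁻¹).toMonoidHom ↔ g⁻¹ * z * g ∈ K := by
    intro z
    rw [Subgroup.mem_comap]
    simp
  have top := core (K.comap (MulAut.conj g⁻¹).toMonoidHom)
    ((hmem _).mpr (Subgroup.subset_closure (by simp)))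
    (g * (h⁻¹ * yg * h) * g⁻¹)
    ((hmem _).mpr (by
      have : g⁻¹ * (g * (h⁻¹ * yg * h) * g⁻¹) * g = h⁻¹ * yg * h := by group
      rw [this]
      exact Subgroup.subset_closure (by simp)))
    (by
      have e : g * (h⁻¹ * yg * h) * g⁻¹ = (h * g⁻¹)⁻¹ * yg * (h * g⁻¹) := by group
      rw [e]
      generalize h * g⁻¹ = k
      have e3 : (k⁻¹ * yg * k) ^ 3 = k⁻¹ * yg ^ 3 * k := by
        rw [pow_three, pow_three]; group
      have y3 : (yg ^ 3 : SL).1 = yg.1 + 1 := by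
        rw [Matrix.SpecialLinearGroup.coe_pow]; exact yc_cube
      calc (k⁻¹ * yg * k : SL).1 ^ 3 = ((k⁻¹ * yg * k) ^ 3 : SL).1 :=
            (Matrix.SpecialLinearGroup.coe_pow _ _).symm
        _ = (k⁻¹ : SL).1 * (yg.1 + 1) * k.1 := by rw [e3, mul_val, mul_val, y3]
        _ = (k⁻¹ : SL).1 * yg.1 * k.1 + (k⁻¹ : SL).1 * k.1 := by noncomm_ring
        _ = (k⁻¹ * yg * k : SL).1 + 1 := by rw [inv_mul_val, mul_val, mul_val])
  rw [eq_top_iff]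
  intro z _
  have : g * z * g⁻¹ ∈ K.comap (MulAut.conj g⁻¹).toMonoidHom := by rw [top]; trivial
  rw [hmem] at this
  have e : g⁻¹ * (g * z * g⁻¹) * g = z := by group
  rwa [e] at this

end SL6

/-- The group `L_6(2) = SL_6(𝔽₂)` is generated invariably by an element of order `31`
and an element of order `7`. -/
theorem SL6_F2_invariable_generation :
    ∃ x y : Matrix.SpecialLinearGroup (Fin 6) (ZMod 2),
      orderOf x = 31 ∧ orderOf y = 7 ∧
      ∀ g h : Matrix.SpecialLinearGroup (Fin 6) (ZMod 2),
        Subgroup.closure {g⁻¹ * x * g, h⁻¹ * y * h} = ⊤ :=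
  ⟨SL6.xg, SL6.yg, SL6.xg_order, SL6.yg_order, SL6.final⟩
end

section
/- In the symplectic group G = Sp(6, 𝔽₂) of 6 × 6 matrices over 𝔽₂ = ZMod 2 preserving the standard symplectic form, there exist a Sylow 3-subgroup P and an element x of order 7 such that for all g, h ∈ G, the subgroup of G generated by g⁻¹Pg ∪ {h⁻¹xh} is all of G. -/
open Matrix

namespace Sp6

/-- The group `Sp(6, 𝔽₂)`. -/
abbrev G : Type := ↥(Matrix.symplecticGroup (Fin 3) (ZMod 2))

/-- The natural module. -/
abbrev V := Fin 3 ⊕ Fin 3 → ZMod 2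

/-- The matrix of the symplectic transvection with centre `a`. -/
def tmat (a : V) : Matrix (Fin 3 ⊕ Fin 3) (Fin 3 ⊕ Fin 3) (ZMod 2) :=
  1 + vecMulVec a a * J (Fin 3) (ZMod 2)

lemma form_self (a : V) : a ⬝ᵥ (J (Fin 3) (ZMod 2) *ᵥ a) = 0 := by
  simp [dotProduct, mulVec, J, Fin.sum_univ_three, Matrix.one_apply, Matrix.fromBlocks]
  ring_nf
  rw [show (2 : ZMod 2) = 0 from rfl]
  simp

lemma J_sq : J (Fin 3) (ZMod 2) * J (Fin 3) (ZMod 2) = 1 := by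
  rw [J_squared]
  ext i j
  simp [ZMod.neg_eq_self_mod_two]

lemma J_tr : (J (Fin 3) (ZMod 2))ᵀ = J (Fin 3) (ZMod 2) := by
  rw [J_transpose]
  ext i j
  simp [ZMod.neg_eq_self_mod_two]

lemma add_self_mat (A : Matrix (Fin 3 ⊕ Fin 3) (Fin 3 ⊕ Fin 3) (ZMod 2)) : A + A = 0 := by
  ext i j
  simp [CharTwo.add_self_eq_zero]

lemma vJv (a : V) : vecMulVec a a * J (Fin 3) (ZMod 2) * vecMulVec a a = 0 := by
  rw [Matrix.mul_assoc, mul_vecMulVec, vecMulVec_mul_vecMulVec, form_self]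
  simp

lemma tmat_mem (a : V) : tmat a ∈ Matrix.symplecticGroup (Fin 3) (ZMod 2) := by
  rw [SymplecticGroup.mem_iff, tmat]
  have h1 : (vecMulVec a a)ᵀ = vecMulVec a a := by
    ext i j; simp [vecMulVec_apply, mul_comm]
  rw [transpose_add, transpose_mul, J_tr, h1, transpose_one]
  have h2 : (1 + vecMulVec a a * J (Fin 3) (ZMod 2)) * J (Fin 3) (ZMod 2) =
      J (Fin 3) (ZMod 2) + vecMulVec a a := by
    rw [add_mul, Matrix.mul_assoc, J_sq]; simp
  rw [h2, mul_add, add_mul, Matrix.mul_one, add_mul, ← Matrix.mul_assoc, J_sq,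
    ← Matrix.mul_assoc, vJv, Matrix.one_mul, add_zero, Matrix.mul_one, add_assoc, add_self_mat, add_zero]

/-- The symplectic transvection with centre `a`. -/
def T (a : V) : G := ⟨tmat a, tmat_mem a⟩

lemma T_mulVec (a v : V) :
    (T a).1 *ᵥ v = v + (a ⬝ᵥ (J (Fin 3) (ZMod 2) *ᵥ v)) • a := by
  simp only [T, tmat, add_mulVec, one_mulVec, ← mulVec_mulVec, vecMulVec_mulVec]
  ext i; simp

lemma T_conj (A : G) (v : V) : A * T v = T (A.1 *ᵥ v) * A := by
  apply Subtype.ext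
  have h := SymplecticGroup.mem_iff'.1 A.2
  simp only [Submonoid.coe_mul, T, tmat, mul_add, add_mul, Matrix.one_mul, Matrix.mul_one]
  congr 1
  have : vecMulVec (A.1 *ᵥ v) (A.1 *ᵥ v) = A.1 * vecMulVec v v * A.1ᵀ := by
    rw [mul_vecMulVec, vecMulVec_mul, vecMul_transpose]
  rw [this]
  simp only [Matrix.mul_assoc] at h ⊢
  rw [h]

lemma form_pres (A : G) (v w : V) :
    (A.1 *ᵥ v) ⬝ᵥ (J (Fin 3) (ZMod 2) *ᵥ (A.1 *ᵥ w)) = v ⬝ᵥ (J (Fin 3) (ZMod 2) *ᵥ w) := by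
  have h := SymplecticGroup.mem_iff'.1 A.2
  conv_rhs => rw [← h]
  simp only [← mulVec_mulVec]
  rw [dotProduct_mulVec v, vecMul_transpose]

/-- A bit as an element of `𝔽₂`. -/
def bit (b : Bool) : ZMod 2 := bif b then 1 else 0

/-- Decoding of a number below `64` as a vector. -/
def enc (n : ℕ) : V :=
  Sum.elim (fun i => bit (n.testBit i.1)) (fun i => bit (n.testBit (i.1 + 3)))

/-- The symplectic form on encoded vectors. -/
def bf (a b : ℕ) : Bool :=
  ((a.testBit 0 && b.testBit 3) ^^ (a.testBit 1 && b.testBit 4) ^^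
    (a.testBit 2 && b.testBit 5)) ^^
  ((a.testBit 3 && b.testBit 0) ^^ (a.testBit 4 && b.testBit 1) ^^
    (a.testBit 5 && b.testBit 2))

lemma bit_xor (a b : Bool) : bit (a ^^ b) = bit a + bit b := by
  revert a b; decide

lemma bit_and (a b : Bool) : bit (a && b) = bit a * bit b := by
  revert a b; decide

lemma bit_inj (a b : Bool) (h : bit a = bit b) : a = b := by
  revert a b; decide

lemma enc_xor (a b : ℕ) : enc (a ^^^ b) = enc a + enc b := by
  funext i
  rcases i with i | i <;> simp [enc, Nat.testBit_xor, bit_xor]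

lemma form_enc (a b : ℕ) :
    enc a ⬝ᵥ (J (Fin 3) (ZMod 2) *ᵥ enc b) = bit (bf a b) := by
  simp only [bf, bit_xor, bit_and]
  simp [dotProduct, mulVec, J, Fin.sum_univ_three, Matrix.one_apply, Matrix.fromBlocks, enc,
    ZMod.neg_eq_self_mod_two]

/-- The transvection on encoded vectors. -/
def tv (u n : ℕ) : ℕ := bif bf u n then n ^^^ u else n

lemma T_enc (u n : ℕ) : (T (enc u)).1 *ᵥ enc n = enc (tv u n) := by
  rw [T_mulVec, form_enc, tv]
  cases bf u n <;> simp [bit, enc_xor]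

/-- A product of transvections. -/
def word (l : List ℕ) : G := (l.map fun u => T (enc u)).prod

/-- The action of a product of transvections on encoded vectors. -/
def act (l : List ℕ) (n : ℕ) : ℕ := l.foldr tv n

lemma word_enc (l : List ℕ) (n : ℕ) : (word l).1 *ᵥ enc n = enc (act l n) := by
  induction l with
  | nil => simp [word, act]
  | cons u l ih =>
    have : word (u :: l) = T (enc u) * word l := by simp [word]
    rw [this, Submonoid.coe_mul, ← mulVec_mulVec, ih, T_enc]
    rfl

lemma word_append (l m : List ℕ) : word (l ++ m) = word l * word m := by
  simp [word]

/-- The encoded standard basis. -/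
def bas : List ℕ := [1, 8, 2, 16, 4, 32]

lemma ext_bas (A B : G) (h : ∀ b ∈ bas, A.1 *ᵥ enc b = B.1 *ᵥ enc b) : A = B := by
  apply Subtype.ext
  have key : ∀ j : Fin 3 ⊕ Fin 3, ∃ b ∈ bas, enc b = Pi.single j 1 := by decide
  apply Matrix.ext_of_mulVec_single
  intro j
  obtain ⟨b, hb, hbe⟩ := key j
  rw [← hbe]
  exact h b hb

lemma word_eq (l m : List ℕ) (h : bas.all (fun b => act l b == act m b) = true) :
    word l = word m := by
  apply ext_bas
  intro b hb
  rw [word_enc, word_enc]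
  rw [List.all_eq_true] at h
  have := h b hb
  rw [eq_of_beq this]

lemma enc_surj (v : V) : ∃ n, n < 64 ∧ enc n = v := by
  revert v; decide +kernel

lemma enc_inj {a b : ℕ} (ha : a < 64) (hb : b < 64) (h : enc a = enc b) : a = b := by
  have key : ∀ a : Fin 64, ∀ b : Fin 64, enc a = enc b → a = b := by decide +kernel
  exact congrArg Fin.val (key ⟨a, ha⟩ ⟨b, hb⟩ h)

/-- Every nonzero encoded vector is in the orbit of one of `1, 3, 7` under the `3`-group. -/
def rep (n : ℕ) : ℕ :=
  let w := (bif n.testBit 0 || n.testBit 3 then 1 else 0) +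
    (bif n.testBit 1 || n.testBit 4 then 1 else 0) +
    (bif n.testBit 2 || n.testBit 5 then 1 else 0)
  if w = 1 then 1 else if w = 2 then 3 else if w = 3 then 7 else 0

/-- A `3`-cycle permuting the three hyperbolic planes, as a product of transvections. -/
def cl : List ℕ := [46, 43, 30, 29]

/-- An element of order `7`, as a product of transvections. -/
def xl : List ℕ := [6, 15, 11, 35, 10, 21]

/-- The `i`-th power of a word. -/
def pw (l : List ℕ) (i : ℕ) : List ℕ := (List.replicate i l).flatten

lemma word_pw (l : List ℕ) (i : ℕ) : word (pw l i) = word l ^ i := by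
  induction i with
  | zero => simp [pw, word]
  | succ i ih =>
    have : pw l (i + 1) = l ++ pw l i := by simp [pw, List.replicate_succ]
    rw [this, word_append, ih, pow_succ']

lemma rep_orbit : ∀ n : Fin 64, n.1 ≠ 0 → ∃ i : Fin 3, ∃ j : Fin 3, ∃ k : Fin 3, ∃ m : Fin 3,
    act (pw [1, 8] i ++ (pw [2, 16] j ++ (pw [4, 32] k ++ pw cl m))) (rep n) = n := by
  decide +kernel

lemma rep_cases : ∀ n : Fin 64, n.1 ≠ 0 → rep n = 1 ∨ rep n = 3 ∨ rep n = 7 := by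
  decide +kernel

/-- The orbit of the first basis vector. -/
def orb (K : Subgroup G) : Set V := {v | ∃ k ∈ K, k.1 *ᵥ enc 1 = v}

lemma orb_smul {K : Subgroup G} {k : G} (hk : k ∈ K) {v : V} (hv : v ∈ orb K) :
    k.1 *ᵥ v ∈ orb K := by
  obtain ⟨a, ha, rfl⟩ := hv
  exact ⟨k * a, K.mul_mem hk ha, by rw [Submonoid.coe_mul, mulVec_mulVec]⟩

lemma orb_smul_iff {K : Subgroup G} {k : G} (hk : k ∈ K) {v : V} :
    k.1 *ᵥ v ∈ orb K ↔ v ∈ orb K := by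
  refine ⟨fun h => ?_, orb_smul hk⟩
  have := orb_smul (K.inv_mem hk) h
  rwa [mulVec_mulVec, ← Submonoid.coe_mul, inv_mul_cancel, Submonoid.coe_one, one_mulVec] at this

lemma orb_rep (K : Subgroup G) (h1 : word [1, 8] ∈ K) (h2 : word [2, 16] ∈ K)
    (h3 : word [4, 32] ∈ K) (hc : word cl ∈ K) (n : ℕ) (hn : n < 64) (h0 : n ≠ 0) : enc n ∈ orb K ↔ enc (rep n) ∈ orb K := by
  obtain ⟨i, j, k, m, h⟩ := rep_orbit ⟨n, hn⟩ h0
  simp only at h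
  have hk : word (pw [1, 8] i ++ (pw [2, 16] j ++ (pw [4, 32] k ++ pw cl m))) ∈ K := by
    simp only [word_append, word_pw]
    exact K.mul_mem (K.pow_mem h1 _) (K.mul_mem (K.pow_mem h2 _)
      (K.mul_mem (K.pow_mem h3 _) (K.pow_mem hc _)))
  rw [← orb_smul_iff hk (v := enc (rep n)), word_enc, h]

lemma enc_zero : enc 0 = 0 := by decide

lemma orb_zero (K : Subgroup G) : (0 : V) ∉ orb K := by
  rintro ⟨k, _, h⟩
  have : (k⁻¹ * k).1 *ᵥ enc 1 = 0 := by
    rw [Submonoid.coe_mul, ← mulVec_mulVec, h, mulVec_zero]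
  rw [inv_mul_cancel, Submonoid.coe_one, one_mulVec] at this
  revert this
  decide

lemma orb_card (K : Subgroup G) (y : G) (hy : y ∈ K) (hy7 : y ^ 7 = 1)
    (hfix : ∀ v : V, y.1 *ᵥ v = v → v = 0) : 7 ∣ Nat.card (orb K) := by
  classical
  let f : Function.End (orb K) := fun v => ⟨y.1 *ᵥ v.1, orb_smul hy v.2⟩
  have hpow : ∀ (i : ℕ) (v : orb K), ((f ^ i : Function.End (orb K)) v).1 = (y ^ i).1 *ᵥ v.1 := by
    intro i
    induction i with
    | zero => intro v; rw [pow_zero, pow_zero, Submonoid.coe_one, one_mulVec]; rfl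
    | succ i ih =>
      intro v
      have e : (f ^ (i + 1) : Function.End (orb K)) v = (f ^ i : Function.End (orb K)) (f v) := by
        rw [pow_succ]; rfl
      rw [e, ih, pow_succ, Submonoid.coe_mul, ← mulVec_mulVec]
  have hf : f ^ 7 ^ 1 = 1 := by
    funext v
    apply Subtype.ext
    rw [hpow, pow_one, hy7, Submonoid.coe_one, one_mulVec]; rfl
  have : Fact (Nat.Prime 7) := ⟨by norm_num⟩
  have h := Equiv.Perm.card_fixedPoints_modEq hf
  have he : IsEmpty (Function.fixedPoints f) := by
    refine ⟨fun ⟨v, hv⟩ => ?_⟩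
    have := hfix v.1 (congrArg Subtype.val hv)
    exact orb_zero K (this ▸ v.2)
  rw [Fintype.card_eq_zero_iff.2 he] at h
  rw [Nat.card_eq_fintype_card]
  exact Nat.modEq_zero_iff_dvd.1 h

lemma orb_card_eq (K : Subgroup G) (p : ℕ → Bool) (hp : ∀ n < 64, enc n ∈ orb K ↔ p n = true) :
    Nat.card (orb K) = ((Finset.range 64).filter (fun n => p n = true)).card := by
  have : orb K = ((((Finset.range 64).filter (fun n => p n = true)).image enc : Finset V) : Set V) := by
    ext v
    obtain ⟨n, hn, rfl⟩ := enc_surj v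
    rw [hp n hn]
    simp only [Finset.coe_image, Finset.coe_filter, Finset.mem_range, Set.mem_image]
    constructor
    · intro h
      exact ⟨n, ⟨hn, h⟩, rfl⟩
    · rintro ⟨m, ⟨hm, h⟩, e⟩
      rwa [← enc_inj hm hn e]
  rw [this, Nat.card_coe_set_eq, Set.ncard_coe_finset, Finset.card_image_of_injOn]
  intro a ha b hb e
  simp at ha hb
  exact enc_inj ha.1 hb.1 e

lemma orb_all (K : Subgroup G) (h1 : word [1, 8] ∈ K) (h2 : word [2, 16] ∈ K)
    (h3 : word [4, 32] ∈ K) (hc : word cl ∈ K) (y : G) (hy : y ∈ K) (hy7 : y ^ 7 = 1)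
    (hfix : ∀ v : V, y.1 *ᵥ v = v → v = 0) (n : ℕ) (hn : n < 64) (h0 : n ≠ 0) :
    enc n ∈ orb K := by
  classical
  have hd := orb_card K y hy hy7 hfix
  have e1 : enc 1 ∈ orb K := ⟨1, K.one_mem, by simp⟩
  rw [orb_card_eq K (fun n => n != 0 && (rep n == 1 || (rep n == 3 && decide (enc 3 ∈ orb K)) ||
    (rep n == 7 && decide (enc 7 ∈ orb K))))] at hd
  · rw [orb_rep K h1 h2 h3 hc n hn h0]
    have h37 : enc 3 ∈ orb K ∧ enc 7 ∈ orb K := by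
      by_cases a : enc 3 ∈ orb K <;> by_cases b : enc 7 ∈ orb K <;>
        simp only [a, b, decide_true, decide_false] at hd ⊢ <;> revert hd <;> decide +kernel
    rcases rep_cases ⟨n, hn⟩ h0 with h | h | h <;> simp only at h <;> rw [h]
    · exact e1
    · exact h37.1
    · exact h37.2
  · intro m hm
    by_cases hm0 : m = 0
    · subst hm0
      simp [enc_zero, orb_zero]
    · rw [orb_rep K h1 h2 h3 hc m hm hm0]
      rcases rep_cases ⟨m, hm⟩ hm0 with h | h | h <;> simp only at h <;> simp [h, hm0, e1]

/-- Candidate words producing a transvection. -/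
def cand (w : ℕ) : List (List ℕ) :=
  [[3, w] ++ cl, [3, w] ++ (cl ++ cl), cl ++ ([3, w] ++ [1, 8]), [3, w] ++ ([2, 16] ++ [1, 8]),
   [3, w] ++ (cl ++ [1, 8]), [3, w] ++ ([2, 16] ++ ([1, 8] ++ [1, 8])),
   [3, w] ++ ([2, 16] ++ ([2, 16] ++ [1, 8]))]

lemma cand_spec : ∀ w : Fin 64, bf 3 w = true → ∃ l ∈ cand w, ∃ k ∈ [5, 3],
    ∃ u ∈ [4, 7, 20, 32, 36, 38, 47, 56, 63],
      bas.all (fun b => act (pw l k) b == act [u] b) = true := by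
  decide +kernel

lemma cand_mem (K : Subgroup G) (h1 : word [1, 8] ∈ K) (h2 : word [2, 16] ∈ K)
    (hc : word cl ∈ K) (w : ℕ) (hw : word [3, w] ∈ K) : ∀ l ∈ cand w, word l ∈ K := by
  have app : ∀ l m : List ℕ, word l ∈ K → word m ∈ K → word (l ++ m) ∈ K := by
    intro l m hl hm
    rw [word_append]
    exact K.mul_mem hl hm
  rw [cand, List.forall_mem_cons, List.forall_mem_cons, List.forall_mem_cons,
    List.forall_mem_cons, List.forall_mem_cons, List.forall_mem_cons, List.forall_mem_cons]
  exact ⟨app _ _ hw hc, app _ _ hw (app _ _ hc hc), app _ _ hc (app _ _ hw h1),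
    app _ _ hw (app _ _ h2 h1), app _ _ hw (app _ _ hc h1),
    app _ _ hw (app _ _ h2 (app _ _ h1 h1)), app _ _ hw (app _ _ h2 (app _ _ h2 h1)),
    fun x hx => absurd hx List.not_mem_nil⟩

lemma word_two (a b : ℕ) : word [a, b] = T (enc a) * T (enc b) := by simp [word]

lemma word_one (a : ℕ) : word [a] = T (enc a) := by simp [word]

lemma all_T (K : Subgroup G) (h1 : word [1, 8] ∈ K) (h2 : word [2, 16] ∈ K)
    (h3 : word [4, 32] ∈ K) (hc : word cl ∈ K) (y : G) (hy : y ∈ K) (hy7 : y ^ 7 = 1)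
    (hfix : ∀ v : V, y.1 *ᵥ v = v → v = 0) (v : V) : T v ∈ K := by
  have horb := orb_all K h1 h2 h3 hc y hy hy7 hfix
  obtain ⟨k, hk, hk3⟩ := horb 3 (by norm_num) (by norm_num)
  obtain ⟨w, hw, hwe⟩ := enc_surj (k.1 *ᵥ enc 8)
  have hb : bf 3 w = true := by
    apply bit_inj
    rw [← form_enc, hwe, ← hk3, form_pres, form_enc]
    decide
  have hT : word [3, w] ∈ K := by
    have : word [3, w] = k * word [1, 8] * k⁻¹ := by
      rw [word_two, word_two, eq_mul_inv_iff_mul_eq, hwe, ← hk3, mul_assoc, ← T_conj,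
        ← mul_assoc, ← T_conj, mul_assoc]
    rw [this]
    exact K.mul_mem (K.mul_mem hk h1) (K.inv_mem hk)
  obtain ⟨l, hl, i, _, u, hu, he⟩ := cand_spec ⟨w, hw⟩ hb
  have hTu : T (enc u) ∈ K := by
    rw [← word_one, ← word_eq _ _ he, word_pw]
    exact K.pow_mem (cand_mem K h1 h2 hc w hT l hl) _
  have hu64 : u < 64 ∧ u ≠ 0 := by
    clear he hTu
    revert u; decide
  obtain ⟨a, ha, hae⟩ := horb u hu64.1 hu64.2
  have step : ∀ (z : G), z ∈ K → ∀ s : V, (T s ∈ K ↔ T (z.1 *ᵥ s) ∈ K) := by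
    intro z hz s
    have e : T (z.1 *ᵥ s) = z * T s * z⁻¹ := by rw [T_conj]; simp
    rw [e]
    constructor
    · intro h
      exact K.mul_mem (K.mul_mem hz h) (K.inv_mem hz)
    · intro h
      have := K.mul_mem (K.mul_mem (K.inv_mem hz) h) hz
      simpa [mul_assoc] using this
  have hT1 : T (enc 1) ∈ K := by
    rw [step a ha, hae]; exact hTu
  obtain ⟨n, hn, rfl⟩ := enc_surj v
  by_cases h0 : n = 0
  · have : T (enc n) = 1 := by
      apply Subtype.ext
      simp [T, tmat, h0, enc_zero]
    rw [this]; exact K.one_mem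
  · obtain ⟨b, hb, hbe⟩ := horb n hn h0
    rw [← hbe, ← step b hb]
    exact hT1

lemma red_spec : ∀ i : Fin 6, ∀ n : Fin 64, n.1 ≠ 0 →
    (bas.take i).all (fun b => bf b n == bf b (bas.getD i 0)) = true →
    ∃ q : Fin 64, act [tv q n ^^^ bas.getD i 0, q] n = bas.getD i 0 ∧
      (bas.take i).all (fun b => act [tv q n ^^^ bas.getD i 0, q] b == b) = true := by
  decide +kernel

lemma bas_ne : ∀ i : Fin 6, enc (bas.getD i 0) ≠ 0 := by decide

lemma take_succ_mem : ∀ i : Fin 6, ∀ b ∈ bas.take (i + 1), b ∈ bas.take i ∨ b = bas.getD i 0 := by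
  decide

lemma reduce (K : Subgroup G) (hT : ∀ v, T v ∈ K) (A : G) (i : ℕ) (hi : i ≤ 6) :
    ∃ k ∈ K, ∀ b ∈ bas.take i, (k * A).1 *ᵥ enc b = enc b := by
  induction i with
  | zero => exact ⟨1, K.one_mem, by simp⟩
  | succ i ih =>
    obtain ⟨k, hk, hf⟩ := ih (by omega)
    obtain ⟨n, hn, hne⟩ := enc_surj ((k * A).1 *ᵥ enc (bas.getD i 0))
    have hb0 := bas_ne ⟨i, by omega⟩
    simp only at hb0
    have hn0 : n ≠ 0 := by
      rintro rfl
      rw [enc_zero] at hne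
      apply hb0
      have : ((k * A)⁻¹ * (k * A)).1 *ᵥ enc (bas.getD i 0) = 0 := by
        rw [Submonoid.coe_mul, ← mulVec_mulVec, ← hne, mulVec_zero]
      rwa [inv_mul_cancel, Submonoid.coe_one, one_mulVec] at this
    have hall : (bas.take i).all (fun b => bf b n == bf b (bas.getD i 0)) = true := by
      rw [List.all_eq_true]
      intro b hb
      rw [beq_iff_eq]
      apply bit_inj
      rw [← form_enc, ← form_enc, hne]
      conv_lhs => rw [← hf b hb]
      rw [form_pres]
    obtain ⟨q, hq, hq2⟩ := red_spec ⟨i, by omega⟩ ⟨n, hn⟩ hn0 hall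
    simp only at hq hq2
    rw [List.all_eq_true] at hq2
    refine ⟨word [tv q n ^^^ bas.getD i 0, q] * k, K.mul_mem ?_ hk, ?_⟩
    · rw [word_two]
      exact K.mul_mem (hT _) (hT _)
    · intro b hb
      rw [mul_assoc, Submonoid.coe_mul, ← mulVec_mulVec]
      rcases take_succ_mem ⟨i, by omega⟩ b hb with h | h
      · rw [hf b h, word_enc, eq_of_beq (hq2 b h)]
      · simp only at h
        rw [h, ← hne, word_enc, hq]

lemma eq_top (K : Subgroup G) (hT : ∀ v, T v ∈ K) : K = ⊤ := by
  rw [eq_top_iff]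
  intro A _
  obtain ⟨k, hk, hf⟩ := reduce K hT A 6 le_rfl
  have : k * A = 1 := by
    apply ext_bas
    intro b hb
    rw [hf b hb]
    simp
  rw [eq_inv_of_mul_eq_one_right this]
  exact K.inv_mem hk

lemma pgroup_zpowers (a : G) (ha : a ^ 3 = 1) : IsPGroup 3 (Subgroup.zpowers a) := by
  have : Fact (Nat.Prime 3) := ⟨by norm_num⟩
  rintro ⟨z, hz⟩
  obtain ⟨i, rfl⟩ := Subgroup.mem_zpowers_iff.1 hz
  refine ⟨1, Subtype.ext ?_⟩
  simp only [SubmonoidClass.coe_pow, OneMemClass.coe_one]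
  rw [pow_one, ← zpow_natCast, zpow_comm, zpow_natCast, ha, _root_.one_zpow]

lemma norm_of (a : G) (ha : a ^ 3 = 1) (S : Set G)
    (h : ∀ s ∈ S, a * s * a⁻¹ ∈ Subgroup.closure S) :
    Subgroup.zpowers a ≤ Subgroup.normalizer (Subgroup.closure S : Set G) := by
  rw [Subgroup.zpowers_le, Subgroup.mem_normalizer_iff]
  have key : ∀ z ∈ Subgroup.closure S, a * z * a⁻¹ ∈ Subgroup.closure S := by
    intro z hz
    have : Subgroup.closure S ≤ (Subgroup.closure S).comap (MulAut.conj a).toMonoidHom := by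
      rw [Subgroup.closure_le]
      intro s hs
      simpa using h s hs
    simpa using this hz
  intro z
  refine ⟨key z, fun hz => ?_⟩
  have h2 := key _ (key _ hz)
  have e : a * (a * (a * z * a⁻¹) * a⁻¹) * a⁻¹ = a ^ 3 * z * (a ^ 3)⁻¹ := by
    simp only [pow_succ, pow_zero, one_mul, _root_.mul_inv_rev, mul_assoc]
  rw [e, ha] at h2
  simpa using h2

lemma comm_norm (a : G) (ha : a ^ 3 = 1) (S : Set G) (h : ∀ s ∈ S, a * s = s * a) :
    Subgroup.zpowers a ≤ Subgroup.normalizer (Subgroup.closure S : Set G) := by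
  apply norm_of a ha
  intro s hs
  rw [h s hs]
  simpa using Subgroup.subset_closure hs

lemma cube (l : List ℕ) (h : bas.all (fun b => act (pw l 3) b == act [] b) = true) :
    word l ^ 3 = 1 := by
  rw [← word_pw, word_eq _ _ h]; rfl

lemma mul_eq (l m l' m' : List ℕ)
    (h : bas.all (fun b => act (l ++ m) b == act (l' ++ m') b) = true) :
    word l * word m = word l' * word m' := by
  rw [← word_append, ← word_append, word_eq _ _ h]

/-- The `3`-group used in the proof. -/
lemma exists_pgroup : ∃ Q : Subgroup G, IsPGroup 3 Q ∧ word [1, 8] ∈ Q ∧ word [2, 16] ∈ Q ∧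
    word [4, 32] ∈ Q ∧ word cl ∈ Q := by
  have c1 : word [1, 8] ^ 3 = 1 := cube _ (by decide +kernel)
  have c2 : word [2, 16] ^ 3 = 1 := cube _ (by decide +kernel)
  have c3 : word [4, 32] ^ 3 = 1 := cube _ (by decide +kernel)
  have cc : word cl ^ 3 = 1 := cube _ (by decide +kernel)
  have m12 : word [2, 16] * word [1, 8] = word [1, 8] * word [2, 16] :=
    mul_eq _ _ _ _ (by decide +kernel)
  have m13 : word [4, 32] * word [1, 8] = word [1, 8] * word [4, 32] :=
    mul_eq _ _ _ _ (by decide +kernel)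
  have m23 : word [4, 32] * word [2, 16] = word [2, 16] * word [4, 32] :=
    mul_eq _ _ _ _ (by decide +kernel)
  have k1 : word cl * word [1, 8] = word [2, 16] * word cl := mul_eq _ _ _ _ (by decide +kernel)
  have k2 : word cl * word [2, 16] = word [4, 32] * word cl := mul_eq _ _ _ _ (by decide +kernel)
  have k3 : word cl * word [4, 32] = word [1, 8] * word cl := mul_eq _ _ _ _ (by decide +kernel)
  have s1 : IsPGroup 3 (Subgroup.closure {word [1, 8]}) := by
    rw [← Subgroup.zpowers_eq_closure]; exact pgroup_zpowers _ c1
  have s2 : IsPGroup 3 (Subgroup.closure {word [2, 16], word [1, 8]}) := by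
    rw [Set.insert_eq, Subgroup.closure_union, ← Subgroup.zpowers_eq_closure]
    refine (pgroup_zpowers _ c2).to_sup_of_normal_right' s1 (comm_norm _ c2 _ ?_)
    rintro s rfl
    exact m12
  have s3 : IsPGroup 3 (Subgroup.closure {word [4, 32], word [2, 16], word [1, 8]}) := by
    rw [Set.insert_eq, Subgroup.closure_union, ← Subgroup.zpowers_eq_closure]
    refine (pgroup_zpowers _ c3).to_sup_of_normal_right' s2 (comm_norm _ c3 _ ?_)
    rintro s (rfl | rfl)
    · exact m23
    · exact m13
  refine ⟨Subgroup.closure {word cl, word [4, 32], word [2, 16], word [1, 8]}, ?_, ?_, ?_, ?_, ?_⟩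
  · rw [Set.insert_eq, Subgroup.closure_union, ← Subgroup.zpowers_eq_closure]
    refine (pgroup_zpowers _ cc).to_sup_of_normal_right' s3 (norm_of _ cc _ ?_)
    rintro s (rfl | rfl | rfl)
    · rw [k3, mul_inv_cancel_right]; exact Subgroup.subset_closure (by simp)
    · rw [k2, mul_inv_cancel_right]; exact Subgroup.subset_closure (by simp)
    · rw [k1, mul_inv_cancel_right]; exact Subgroup.subset_closure (by simp)
  all_goals exact Subgroup.subset_closure (by simp)

lemma x_pow : word xl ^ 7 = 1 := by
  rw [← word_pw, word_eq _ [] (by decide +kernel)]; rfl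

lemma act_x : ∀ n : Fin 64, act xl n < 64 ∧ (act xl n = n → n.1 = 0) := by decide +kernel

lemma x_fix (v : V) (h : (word xl).1 *ᵥ v = v) : v = 0 := by
  obtain ⟨n, hn, rfl⟩ := enc_surj v
  rw [word_enc] at h
  have := act_x ⟨n, hn⟩
  simp only at this
  rw [this.2 (enc_inj this.1 hn h), enc_zero]

end Sp6

open Sp6 in
/-- `Sp_6(𝔽₂)` is generated invariably by a Sylow `3`-subgroup and an element of
order `7`. -/
theorem Sp6_F2_invariable_generation :
    ∃ P : Subgroup (Matrix.symplecticGroup (Fin 3) (ZMod 2)),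
      IsPGroup 3 P ∧ Nat.Coprime P.index 3 ∧
      ∃ x : Matrix.symplecticGroup (Fin 3) (ZMod 2), orderOf x = 7 ∧
        ∀ g h : Matrix.symplecticGroup (Fin 3) (ZMod 2),
          Subgroup.closure
            ({z | ∃ a ∈ P, z = g⁻¹ * a * g} ∪ {h⁻¹ * x * h}) = ⊤ := by
  have : Fact (Nat.Prime 3) := ⟨by norm_num⟩
  have : Fact (Nat.Prime 7) := ⟨by norm_num⟩
  obtain ⟨Q, hQ, q1, q2, q3, qc⟩ := exists_pgroup
  obtain ⟨P, hP⟩ := hQ.exists_le_sylow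
  refine ⟨P, P.isPGroup', ?_, word xl, ?_, ?_⟩
  · rw [Nat.coprime_comm, Nat.Prime.coprime_iff_not_dvd (by norm_num)]
    exact P.not_dvd_index
  · refine orderOf_eq_prime x_pow ?_
    intro h
    have := x_fix (enc 1) (by rw [h]; simp)
    revert this
    decide
  · intro g h
    set H := Subgroup.closure
      ({z | ∃ a ∈ (P : Subgroup G), z = g⁻¹ * a * g} ∪ {h⁻¹ * word xl * h}) with hH
    let K : Subgroup G := H.comap (MulAut.conj g⁻¹).toMonoidHom
    have hK : ∀ z : G, z ∈ K ↔ g⁻¹ * z * g ∈ H := by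
      intro z
      simp [K]
    have hPK : ∀ a ∈ Q, a ∈ K := by
      intro a ha
      rw [hK]
      exact Subgroup.subset_closure (Or.inl ⟨a, hP ha, rfl⟩)
    let s : G := g * h⁻¹
    let y : G := s * word xl * s⁻¹
    have hy : y ∈ K := by
      rw [hK]
      have : g⁻¹ * y * g = h⁻¹ * word xl * h := by
        simp only [y, s]; group
      rw [this]
      exact Subgroup.subset_closure (Or.inr rfl)
    have hy7 : y ^ 7 = 1 := by
      simp only [y]
      rw [conj_pow, x_pow]; simp
    have hfix : ∀ v : V, y.1 *ᵥ v = v → v = 0 := by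
      intro v hv
      have e : word xl * s⁻¹ = s⁻¹ * y := by simp only [y]; group
      have h0 : (s⁻¹).1 *ᵥ v = 0 := by
        apply x_fix
        rw [mulVec_mulVec, ← Submonoid.coe_mul, e, Submonoid.coe_mul, ← mulVec_mulVec, hv]
      have h1 : (s * s⁻¹).1 *ᵥ v = 0 := by
        rw [Submonoid.coe_mul, ← mulVec_mulVec, h0, mulVec_zero]
      rwa [mul_inv_cancel, Submonoid.coe_one, one_mulVec] at h1
    have hT := all_T K (hPK _ q1) (hPK _ q2) (hPK _ q3) (hPK _ qc) y hy hy7 hfix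
    have htop := eq_top K hT
    rw [eq_top_iff]
    intro z _
    have hz : g * z * g⁻¹ ∈ K := by rw [htop]; trivial
    rw [hK] at hz
    simpa [mul_assoc] using hz
end
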